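/- arXiv:2205.08825 — 6 statements merged into one kernel-verified Lean document; each statement's English description precedes it below -/
import Mathlib

section
/- Let X = Σ_{i=1}^n Rᵢ ∂/∂xᵢ be a polynomial vector field of degree at most one defined on S_{p,q}, with Rᵢ = Σ_{j=1}^n c_{ij} xⱼ + c_{i0} for real coefficients c_{ij}, c_{i0}. Then the matrix (c_{ij})_{1 ≤ i,j ≤ p+1} is skew-symmetric, i.e. c_{ij} + c_{ji} = 0 for all 1 ≤ i, j ≤ p+1, and c_{i0} = 0 for all i ∈ {1,…,n}. -/
open MvPolynomial

/-- The first `p+1` coordinates of `Fin (p+q+1)`, corresponding to `x₁, …, x_{p+1}`. -/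
def idx1 (p q : ℕ) (i : Fin (p+1)) : Fin (p+q+1) := Fin.castLE (by omega) i

/-- The last `q` coordinates of `Fin (p+q+1)`, corresponding to `x_{p+2}, …, x_n`. -/
def idx2 (p q : ℕ) (j : Fin q) : Fin (p+q+1) := ⟨p+1+(j:ℕ), by omega⟩

/-- The polynomial `h = (x₁² + ⋯ + x_{p+1}² − a²)² + x_{p+2}² + ⋯ + x_n² − 1`
whose zero set is `S_{p,q}`. -/
noncomputable def hpq (p q : ℕ) (a : ℝ) : MvPolynomial (Fin (p+q+1)) ℝ :=
  ((∑ i : Fin (p+1), X (idx1 p q i) ^ 2) - C (a^2))^2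
    + (∑ j : Fin q, X (idx2 p q j) ^ 2) - 1

/- The polynomial `h` is even, so its zero set `S` is symmetric and its gradient is odd. Hence with
an affine field `x ↦ c x + c₀` also `x ↦ c (-x) + c₀` is tangent to `S`, and so are the linear
field `c x` and the constant field `c₀` separately.

Write `x = (y, z)` with `y` the first `p + 1` coordinates. Where `|y|² = a² + 1` and `z = 0`, the
gradient is `4 x`, so `⟨c x, x⟩` vanishes on a sphere of the `y`-space; by homogeneity it vanishes
on all of it, and polarization gives the skew-symmetry. The same sphere kills the first `p + 1`
entries of `c₀`. Where `|y|² = a²` and `|z|² = 1`, the gradient is `2 (0, z)`, which kills the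
others. -/

open Matrix

section Tangency

variable {σ R : Type*} [CommRing R]

/-- The gradient of the polynomial `f` at the point `x`. -/
noncomputable def gradAt (f : MvPolynomial σ R) (x : σ → R) : σ → R :=
  fun i => eval x (pderiv i f)

/-- The vector fields tangent to the hypersurface `f = 0`, in the sense that they are orthogonal to
the gradient of `f` at each of its points. They are arbitrary functions and need to be tangent only
at points with coordinates in `R`, so this is weaker than invariance with a polynomial cofactor. -/
def tangentFields [Fintype σ] (f : MvPolynomial σ R) : Submodule R ((σ → R) → σ → R) where
  carrier := {F | ∀ x, eval x f = 0 → F x ⬝ᵥ gradAt f x = 0}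
  add_mem' hF hG x hx := by rw [Pi.add_apply, add_dotProduct, hF x hx, hG x hx, add_zero]
  zero_mem' x _ := zero_dotProduct _
  smul_mem' r F hF x hx := by rw [Pi.smul_apply, smul_dotProduct, hF x hx, smul_zero]

lemma affine_mem_tangentFields_of_cofactor [Fintype σ] {f K : MvPolynomial σ R}
    {P : σ → MvPolynomial σ R} {c : Matrix σ σ R} {c₀ : σ → R}
    (hP : ∀ i, P i = ∑ j, C (c i j) * X j + C (c₀ i)) (hK : ∑ i, P i * pderiv i f = K * f) :
    (fun x => c *ᵥ x + c₀) ∈ tangentFields f := by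
  intro x hx
  have htan := congrArg (eval x) hK
  simpa [hP, hx, gradAt, mulVec, dotProduct] using htan

lemma eval_bind₁_neg_X (f : MvPolynomial σ R) (x : σ → R) :
    eval x (bind₁ (fun i => -X i) f) = eval (-x) f := by
  simp only [eval, eval₂Hom_bind₁, map_neg, eval₂Hom_X']
  rfl

lemma pderiv_bind₁_neg_X (f : MvPolynomial σ R) (i : σ) :
    pderiv i (bind₁ (fun j => -X j) f) = -bind₁ (fun j => -X j) (pderiv i f) := by
  classical
  induction f using MvPolynomial.induction_on with
  | C r => simp
  | add f g hf hg => simp only [map_add, hf, hg, neg_add]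
  | mul_X f j hf =>
    have hX : bind₁ (fun k => -X k) (pderiv i (X j : MvPolynomial σ R)) = pderiv i (X j) := by
      obtain rfl | hij := eq_or_ne j i <;> simp [*]
    simp only [map_mul, pderiv_mul, map_add, hf, bind₁_X_right, map_neg, hX]
    ring

lemma comp_neg_mem_tangentFields [Fintype σ] {f : MvPolynomial σ R}
    (heven : bind₁ (fun i => -X i) f = f) {F : (σ → R) → σ → R} (hF : F ∈ tangentFields f) :
    (fun x => F (-x)) ∈ tangentFields f := by
  intro x hx
  have hodd : gradAt f (-x) = -gradAt f x := by
    funext i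
    rw [Pi.neg_apply, gradAt, gradAt, ← eval_bind₁_neg_X, eq_neg_iff_add_eq_zero,
      ← neg_eq_iff_add_eq_zero, ← map_neg, ← pderiv_bind₁_neg_X, heven]
  have hnx : eval (-x) f = 0 := by rw [← eval_bind₁_neg_X, heven, hx]
  simpa only [hodd, dotProduct_neg, neg_eq_zero] using hF (-x) hnx

lemma linear_mem_and_const_mem_tangentFields_of_affine_mem [Fintype σ] [Invertible (2 : R)]
    {f : MvPolynomial σ R} (heven : bind₁ (fun i => -X i) f = f) {c : Matrix σ σ R} {c₀ : σ → R}
    (h : (fun x => c *ᵥ x + c₀) ∈ tangentFields f) :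
    (fun x => c *ᵥ x) ∈ tangentFields f ∧ (fun _ => c₀) ∈ tangentFields f := by
  have hconst : (fun _ => c₀) ∈ tangentFields f := by
    convert Submodule.smul_mem _ (⅟2 : R) (add_mem h (comp_neg_mem_tangentFields heven h)) using 1
    funext x
    simp only [Pi.smul_apply, Pi.add_apply, mulVec_neg]
    rw [add_add_add_comm, add_neg_cancel, zero_add, ← two_smul R c₀, invOf_smul_smul]
  refine ⟨?_, hconst⟩
  convert sub_mem h hconst using 1
  funext x
  exact (add_sub_cancel_right _ _).symm

end Tangency

section QuadraticForm

variable {σ R : Type*} [Fintype σ] [CommRing R]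

lemma mulVec_dotProduct_self_add (c : Matrix σ σ R) (x y : σ → R) :
    c *ᵥ (x + y) ⬝ᵥ (x + y) =
      c *ᵥ x ⬝ᵥ x + c *ᵥ y ⬝ᵥ y + (c *ᵥ x ⬝ᵥ y + c *ᵥ y ⬝ᵥ x) := by
  simp only [mulVec_add, add_dotProduct, dotProduct_add]
  ring

lemma add_apply_eq_zero_of_mulVec_dotProduct_self_eq_zero {c : Matrix σ σ R} {s : Finset σ}
    (h : ∀ x, (∀ i ∉ s, x i = 0) → c *ᵥ x ⬝ᵥ x = 0) {i j : σ} (hi : i ∈ s) (hj : j ∈ s) :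
    c i j + c j i = 0 := by
  classical
  have hsupp {k : σ} (hk : k ∈ s) : ∀ l ∉ s, (Pi.single k 1 : σ → R) l = 0 :=
    fun l hl => Pi.single_eq_of_ne (ne_of_mem_of_not_mem hk hl).symm 1
  have hij := h (Pi.single i 1 + Pi.single j 1) fun l hl => by
    rw [Pi.add_apply, hsupp hi l hl, hsupp hj l hl, add_zero]
  rw [mulVec_dotProduct_self_add, h _ (hsupp hi), h _ (hsupp hj)] at hij
  simpa [add_comm] using hij

end QuadraticForm

section SphereProduct

variable {σ R : Type*} [DecidableEq σ] [CommRing R]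

lemma pderiv_sum_X_sq (t : Finset σ) (i : σ) :
    pderiv i (∑ j ∈ t, X j ^ 2 : MvPolynomial σ R) = if i ∈ t then 2 * X i else 0 := by
  simp [pderiv_X, Pi.single_apply]

variable [Fintype σ]

/-- The polynomial `(∑_{i ∈ s} xᵢ² - a²)² + ∑_{i ∉ s} xᵢ² - 1`, which is `hpq` for coordinates
indexed by any finite type and split into any set `s` and its complement. -/
noncomputable def sphereProductPoly (s : Finset σ) (a : R) : MvPolynomial σ R :=
  ((∑ i ∈ s, X i ^ 2) - C (a ^ 2)) ^ 2 + ∑ i ∈ sᶜ, X i ^ 2 - 1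

variable {s : Finset σ} {a : R}

lemma bind₁_neg_X_sphereProductPoly :
    bind₁ (fun i => -X i) (sphereProductPoly s a) = sphereProductPoly s a := by
  simp [sphereProductPoly]

lemma eval_sphereProductPoly (x : σ → R) :
    eval x (sphereProductPoly s a) =
      (∑ i ∈ s, x i ^ 2 - a ^ 2) ^ 2 + ∑ i ∈ sᶜ, x i ^ 2 - 1 := by
  simp [sphereProductPoly]

lemma gradAt_sphereProductPoly (x : σ → R) (i : σ) :
    gradAt (sphereProductPoly s a) x i =
      if i ∈ s then 4 * (∑ j ∈ s, x j ^ 2 - a ^ 2) * x i else 2 * x i := by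
  simp only [gradAt, sphereProductPoly, map_sub, map_add, pderiv_pow, pderiv_sum_X_sq, pderiv_C,
    pderiv_one, Finset.mem_compl]
  split_ifs
  · simp only [eval_sub, eval_mul, eval_pow, map_sum, map_natCast, map_ofNat, eval_X, eval_C,
      map_zero]
    ring
  · simp

end SphereProduct

namespace sphereProductPoly

variable {σ : Type*} [Fintype σ] [DecidableEq σ] {s : Finset σ} {a : ℝ}
  {F : (σ → ℝ) → σ → ℝ} {c : Matrix σ σ ℝ} {c₀ : σ → ℝ}

lemma dotProduct_self_eq_zero_of_mem_tangentFields
    (hF : F ∈ tangentFields (sphereProductPoly s a)) {x : σ → ℝ} (hsupp : ∀ i ∉ s, x i = 0)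
    (hx : x ⬝ᵥ x = a ^ 2 + 1) : F x ⬝ᵥ x = 0 := by
  have hs : ∑ i ∈ s, x i ^ 2 = a ^ 2 + 1 := by
    rw [← hx, dotProduct, ← Finset.sum_subset s.subset_univ fun i _ hi => by simp [hsupp i hi]]
    simp only [sq]
  have hsc : ∑ i ∈ sᶜ, x i ^ 2 = 0 :=
    Finset.sum_eq_zero fun i hi => by simp [hsupp i (Finset.mem_compl.1 hi)]
  have hgrad : gradAt (sphereProductPoly s a) x = (4 : ℝ) • x := by
    funext i
    rw [gradAt_sphereProductPoly, hs]
    split_ifs with hi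
    · simp
    · simp [hsupp i hi]
  have htan := hF x (by rw [eval_sphereProductPoly, hs, hsc]; ring)
  simpa [hgrad] using htan

lemma sum_compl_mul_eq_zero_of_mem_tangentFields
    (hF : F ∈ tangentFields (sphereProductPoly s a)) {x : σ → ℝ}
    (hs : ∑ i ∈ s, x i ^ 2 = a ^ 2) (hsc : ∑ i ∈ sᶜ, x i ^ 2 = 1) :
    ∑ i ∈ sᶜ, F x i * x i = 0 := by
  have hgrad (i : σ) : gradAt (sphereProductPoly s a) x i = if i ∈ sᶜ then 2 * x i else 0 := by
    rw [gradAt_sphereProductPoly, hs]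
    by_cases hi : i ∈ s <;> simp [hi]
  have htan := hF x (by rw [eval_sphereProductPoly, hs, hsc]; ring)
  simp only [dotProduct, hgrad, mul_ite, mul_zero, ← Finset.sum_filter, Finset.filter_univ_mem,
    mul_left_comm _ (2 : ℝ), ← Finset.mul_sum] at htan
  simpa using htan

lemma mulVec_dotProduct_self_eq_zero_of_mem_tangentFields
    (hc : (fun x => c *ᵥ x) ∈ tangentFields (sphereProductPoly s a)) {x : σ → ℝ}
    (hsupp : ∀ i ∉ s, x i = 0) : c *ᵥ x ⬝ᵥ x = 0 := by
  obtain rfl | hx := eq_or_ne x 0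
  · exact dotProduct_zero _
  have hxx : 0 < x ⬝ᵥ x := by simpa using dotProduct_star_self_pos_iff.2 hx
  obtain ⟨r, hr, hr2⟩ : ∃ r : ℝ, 0 < r ∧ r ^ 2 = (a ^ 2 + 1) / (x ⬝ᵥ x) :=
    ⟨√((a ^ 2 + 1) / (x ⬝ᵥ x)), by positivity, Real.sq_sqrt (by positivity)⟩
  have hscaled : c *ᵥ (r • x) ⬝ᵥ (r • x) = 0 := by
    refine dotProduct_self_eq_zero_of_mem_tangentFields hc (fun i hi => by simp [hsupp i hi]) ?_
    rw [smul_dotProduct, dotProduct_smul, smul_smul, ← sq, hr2, smul_eq_mul,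
      div_mul_cancel₀ _ hxx.ne']
  simpa [mulVec_smul, hr.ne'] using hscaled

lemma eq_zero_of_const_mem_tangentFields (hs : s.Nonempty)
    (hc₀ : (fun _ => c₀) ∈ tangentFields (sphereProductPoly s a)) : c₀ = 0 := by
  funext i
  by_cases hi : i ∈ s
  · have hr : 0 < √(a ^ 2 + 1) := by positivity
    have htan := dotProduct_self_eq_zero_of_mem_tangentFields hc₀ (x := Pi.single i √(a ^ 2 + 1))
      (fun j hj => Pi.single_eq_of_ne (ne_of_mem_of_not_mem hi hj).symm _)
      (by simp [Real.mul_self_sqrt (by positivity : (0 : ℝ) ≤ a ^ 2 + 1)])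
    simpa [hr.ne'] using htan
  · obtain ⟨o, ho⟩ := hs
    let x : σ → ℝ := s.piecewise (Pi.single o a) (Pi.single i 1)
    have hx {j : σ} (hj : j ∈ s) : x j = Pi.single (M := fun _ => ℝ) o a j :=
      s.piecewise_eq_of_mem _ _ hj
    have hxc {j : σ} (hj : j ∈ sᶜ) : x j = Pi.single (M := fun _ => ℝ) i 1 j :=
      s.piecewise_eq_of_notMem _ _ (Finset.mem_compl.1 hj)
    have hs : ∑ j ∈ s, x j ^ 2 = a ^ 2 := by
      rw [Finset.sum_congr rfl fun j hj => by rw [hx hj]]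
      simp [Pi.single_apply, ite_pow, ho]
    have hsc : ∑ j ∈ sᶜ, x j ^ 2 = 1 := by
      rw [Finset.sum_congr rfl fun j hj => by rw [hxc hj]]
      simp [Pi.single_apply, ite_pow, hi]
    have htan := sum_compl_mul_eq_zero_of_mem_tangentFields hc₀ hs hsc
    rw [Finset.sum_congr rfl fun j hj => by rw [hxc hj]] at htan
    simpa [Pi.single_apply, hi] using htan

end sphereProductPoly

lemma sum_eq_sum_idx1_add_sum_idx2 (p q : ℕ) {M : Type*} [AddCommMonoid M]
    (f : Fin (p + q + 1) → M) : ∑ k, f k = ∑ i, f (idx1 p q i) + ∑ j, f (idx2 p q j) := by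
  rw [← Equiv.sum_comp (finCongr (Nat.add_right_comm p 1 q)) f, Fin.sum_univ_add]
  rfl

lemma hpq_eq_sphereProductPoly (p q : ℕ) (a : ℝ) :
    hpq p q a = sphereProductPoly {i : Fin (p + q + 1) | (i : ℕ) < p + 1} a := by
  have hidx1 (i : Fin (p + 1)) : (idx1 p q i : ℕ) < p + 1 := i.2
  have hidx2 (j : Fin q) : ¬(idx2 p q j : ℕ) < p + 1 := by simp only [idx2]; omega
  simp only [hpq, sphereProductPoly, Finset.compl_filter, Finset.sum_filter,
    sum_eq_sum_idx1_add_sum_idx2, hidx1, hidx2, if_true, if_false, not_true, not_false_eq_true,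
    Finset.sum_const_zero, add_zero, zero_add]

theorem stmt1_general {σ : Type*} [Fintype σ] [DecidableEq σ] {s : Finset σ} (hs : s.Nonempty)
    {a : ℝ} {c : Matrix σ σ ℝ} {c₀ : σ → ℝ}
    (h : (fun x => c *ᵥ x + c₀) ∈ tangentFields (sphereProductPoly s a)) :
    (∀ i j, i ∈ s → j ∈ s → c i j + c j i = 0) ∧ c₀ = 0 := by
  obtain ⟨hlin, hconst⟩ :=
    linear_mem_and_const_mem_tangentFields_of_affine_mem bind₁_neg_X_sphereProductPoly h
  refine ⟨fun i j hi hj => ?_, sphereProductPoly.eq_zero_of_const_mem_tangentFields hs hconst⟩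
  exact add_apply_eq_zero_of_mulVec_dotProduct_self_eq_zero
    (fun _ => sphereProductPoly.mulVec_dotProduct_self_eq_zero_of_mem_tangentFields hlin) hi hj

/-- A degree-one polynomial vector field `X = Σ Rᵢ ∂/∂xᵢ`, with
`Rᵢ = Σⱼ c_{ij} xⱼ + c_{i0}`, defined on `S_{p,q}` (i.e. `X h = K h`) has
`(c_{ij})_{1 ≤ i,j ≤ p+1}` skew-symmetric and all constant terms `c_{i0} = 0`. -/
theorem stmt1 (p q : ℕ) (hp : 1 ≤ p) (hq : 1 ≤ q) (a : ℝ) (ha : 1 < a)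
    (R : Fin (p+q+1) → MvPolynomial (Fin (p+q+1)) ℝ)
    (c : Fin (p+q+1) → Fin (p+q+1) → ℝ) (c0 : Fin (p+q+1) → ℝ)
    (hR : ∀ i, R i = (∑ j, C (c i j) * X j) + C (c0 i))
    (K : MvPolynomial (Fin (p+q+1)) ℝ)
    (hinv : (∑ i, R i * pderiv i (hpq p q a)) = K * hpq p q a) :
    (∀ i j : Fin (p+q+1), (i:ℕ) < p+1 → (j:ℕ) < p+1 → c i j + c j i = 0) ∧
    (∀ i, c0 i = 0) := by
  have htan := affine_mem_tangentFields_of_cofactor hR hinv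
  rw [hpq_eq_sphereProductPoly] at htan
  simpa [funext_iff] using stmt1_general ⟨0, by simp⟩ htan
end

section
/- Let X = Σ_{i=1}^n Rᵢ ∂/∂xᵢ be a polynomial vector field of degree at most two defined on S_{p,q}, with X h = K h, and write Rᵢ = Σ_{1≤j≤k≤n} βᵢ(j,k) xⱼxₖ + Σ_{j=1}^n βᵢⱼ xⱼ + βᵢ₀ (βᵢ(j,k) is the coefficient of xⱼxₖ in Rᵢ, with j ≤ k) and K = Σ_{s=1}^n αₛ xₛ + α₀. Then: (i) α₀ = 0 and αᵢ = 0 for all 1 ≤ i ≤ p+1, so K = α_{p+2}x_{p+2} + ⋯ + αₙxₙ; (ii) βᵢⱼ + βⱼᵢ = 0 whenever i,j ∈ {1,…,p+1} and whenever i,j ∈ {p+2,…,n}; (iii) βᵢ₀ = 0 for i ∈ {1,…,p+1}, and β_{l0} = ((a⁴−1)/2)·α_l for l ∈ {p+2,…,n}; (iv) βᵢ(i,i) = αᵢ/4 for i ≤ p+1, β_l(i,i) = −a²α_l/2 for i ≤ p+1 and l ≥ p+2, and β_l(l,l) = α_l/2 for l ≥ p+2; (v) for pairwise distinct i,j,k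 ∈ {1,…,p+1}: βᵢ(j,k) + βⱼ(i,k) + βₖ(i,j) = 0, and for pairwise distinct l,m,r ∈ {p+2,…,n}: β_l(m,r) + β_m(l,r) + β_r(l,m) = 0; (vi) for distinct i,j ∈ {1,…,p+1} and l ∈ {p+2,…,n}: βᵢ(j,l) + βⱼ(i,l) = 0, and for distinct l,m ∈ {p+2,…,n} and j ∈ {1,…,p+1}: β_l(j,m) + β_m(j,l) = 0; (vii) for distinct i,j ∈ {1,…,p+1}: 4(βᵢ(j,j) + βⱼ(i,j)) = αᵢ, and for distinct l,m ∈ {p+2,…,n}: 2(β_l(m,m) + β_m(l,m)) = α_l. -/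
open MvPolynomial

/-- `β_f(j,k)`: the coefficient of the monomial `xⱼxₖ` (of `xⱼ²` when `j = k`) in `f`. -/
noncomputable def quadCoeff {n : ℕ} (f : MvPolynomial (Fin n) ℝ) (j k : Fin n) : ℝ :=
  MvPolynomial.coeff (Finsupp.single j 1 + Finsupp.single k 1) f

/-- `β_fj`: the coefficient of the monomial `xⱼ` in `f`. -/
noncomputable def linCoeff {n : ℕ} (f : MvPolynomial (Fin n) ℝ) (j : Fin n) : ℝ :=
  MvPolynomial.coeff (Finsupp.single j 1) f

/-- `β_f0`: the constant coefficient of `f`. -/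
noncomputable def constCoeff {n : ℕ} (f : MvPolynomial (Fin n) ℝ) : ℝ :=
  MvPolynomial.coeff 0 f

/-!
Write `U` and `V` for the squared norms of the two blocks of variables, `c = a²`, and
`P = ∑ xᵢ Rᵢ`, `Q = ∑ xₗ Rₗ` for the sums over the first and the second block. Then
`h = (U - c)² + V - 1`, and `X h = K h` reads `(4 P - (U - c) K) (U - c) = (V - 1) K - 2 Q`.
The right-hand side has degree at most three, so `L = 4 P - (U - c) K` has degree at most one.
Where the second block of variables vanishes, so do `V` and `Q`, hence `K = -(U - c) L` there, and
comparing degrees `L = K = 0` there. Where the first block vanishes, so do `U` and `P`, hence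
`L = c K` there. Since `K` and `L` are affine, `L = c K` everywhere, which leaves `4 P = U K` and
`2 Q = V K - c U K + (c² - 1) K`; all the relations are read off from these two identities.
-/

open Finsupp (single)

section RadialPairing

variable {σ 𝕜 : Type*} [CommSemiring 𝕜]

/-- The polynomial `∑ i ∈ s, xᵢ Rᵢ`: half the derivative of `∑ i ∈ s, xᵢ²` along the vector field
`∑ i, Rᵢ ∂/∂xᵢ`. -/
noncomputable def radialPairing (s : Finset σ) (R : σ → MvPolynomial σ 𝕜) : MvPolynomial σ 𝕜 :=
  ∑ i ∈ s, X i * R i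

/-- The squared norm `∑ i ∈ s, xᵢ²` of the block of variables indexed by `s`. -/
noncomputable def blockNormSq (𝕜 : Type*) [CommSemiring 𝕜] (s : Finset σ) : MvPolynomial σ 𝕜 :=
  ∑ i ∈ s, X i ^ 2

lemma blockNormSq_mul (s : Finset σ) (f : MvPolynomial σ 𝕜) :
    blockNormSq 𝕜 s * f = radialPairing s (fun i ↦ X i * f) := by
  simp only [blockNormSq, radialPairing, Finset.sum_mul, pow_two, mul_assoc]

lemma coeff_single_add_single_add_eq_zero {f : MvPolynomial σ 𝕜} (hf : f.totalDegree ≤ 1)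
    (i j : σ) (n : σ →₀ ℕ) : coeff (single i 1 + single j 1 + n) f = 0 := by
  apply coeff_eq_zero_of_totalDegree_lt
  change _ < (single i 1 + single j 1 + n).degree
  simp only [map_add, Finsupp.degree_single]
  lia

lemma coeff_single_add_single_eq_zero {f : MvPolynomial σ 𝕜} (hf : f.totalDegree ≤ 1) (i j : σ) :
    coeff (single i 1 + single j 1) f = 0 := by
  simpa only [add_zero] using coeff_single_add_single_add_eq_zero hf i j 0

lemma exists_eq_single_add_of_ne_zero {m : σ →₀ ℕ} (hm : m ≠ 0) : ∃ i n, m = single i 1 + n := by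
  obtain ⟨i, hi⟩ := Finsupp.ne_iff.1 hm
  have hle : single i 1 ≤ m := Finsupp.single_le_iff.2 (Nat.one_le_iff_ne_zero.2 hi)
  exact ⟨i, m - single i 1, (add_tsub_cancel_of_le hle).symm⟩

lemma ext_of_totalDegree_le_one {f g : MvPolynomial σ 𝕜} (hf : f.totalDegree ≤ 1)
    (hg : g.totalDegree ≤ 1) (h₀ : coeff 0 f = coeff 0 g)
    (h₁ : ∀ i, coeff (single i 1) f = coeff (single i 1) g) : f = g := by
  ext m
  obtain rfl | hm := eq_or_ne m 0
  · exact h₀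
  obtain ⟨i, n, rfl⟩ := exists_eq_single_add_of_ne_zero hm
  obtain rfl | hn := eq_or_ne n 0
  · simpa only [add_zero] using h₁ i
  obtain ⟨j, n, rfl⟩ := exists_eq_single_add_of_ne_zero hn
  rw [← add_assoc, coeff_single_add_single_add_eq_zero hf, coeff_single_add_single_add_eq_zero hg]

lemma totalDegree_C_mul_le (r : 𝕜) (f : MvPolynomial σ 𝕜) :
    (C r * f).totalDegree ≤ f.totalDegree := by
  rw [← smul_eq_C_mul]
  exact totalDegree_smul_le r f

lemma totalDegree_radialPairing_le {s : Finset σ} {R : σ → MvPolynomial σ 𝕜} {d : ℕ}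
    (hR : ∀ i ∈ s, (R i).totalDegree ≤ d) : (radialPairing s R).totalDegree ≤ d + 1 :=
  totalDegree_finsetSum_le fun i hi ↦ (totalDegree_mul _ _).trans <| by
    have hX : (X i : MvPolynomial σ 𝕜).totalDegree ≤ 1 := (isHomogeneous_X 𝕜 i).totalDegree_le
    linarith [hR i hi]

lemma coeff_zero_X_mul (i : σ) (f : MvPolynomial σ 𝕜) : coeff 0 (X i * f) = 0 := by
  classical
  rw [coeff_X_mul', if_neg (by simp)]

lemma isHomogeneous_blockNormSq (s : Finset σ) : (blockNormSq 𝕜 s).IsHomogeneous 2 :=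
  IsHomogeneous.sum _ _ _ fun i _ ↦ isHomogeneous_X_pow i 2

lemma coeff_add_X_mul_eq_zero {f : MvPolynomial σ 𝕜} {m : σ →₀ ℕ}
    (hf : ∀ n, coeff (m + n) f = 0) {a : σ} (ha : m a = 0) (n : σ →₀ ℕ) :
    coeff (m + n) (X a * f) = 0 := by
  classical
  rw [coeff_X_mul']
  split_ifs with han
  · have hle : single a 1 ≤ n := by simpa [ha, Nat.one_le_iff_ne_zero] using han
    rw [add_tsub_assoc_of_le hle, hf]
  · rfl

lemma coeff_radialPairing_eq_zero {s : Finset σ} {m : σ →₀ ℕ} (hm : ∀ i ∈ s, m i = 0)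
    (R : σ → MvPolynomial σ 𝕜) : coeff m (radialPairing s R) = 0 := by
  classical
  rw [radialPairing, coeff_sum]
  refine Finset.sum_eq_zero fun i hi ↦ ?_
  rw [coeff_X_mul', if_neg (by simp [hm i hi])]

lemma coeff_blockNormSq_mul_eq_zero {s : Finset σ} {m : σ →₀ ℕ} (hm : ∀ i ∈ s, m i = 0)
    (f : MvPolynomial σ 𝕜) : coeff m (blockNormSq 𝕜 s * f) = 0 := by
  rw [blockNormSq_mul, coeff_radialPairing_eq_zero hm]

lemma coeff_add_blockNormSq_mul_eq_zero {f : MvPolynomial σ 𝕜} {m : σ →₀ ℕ}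
    (hf : ∀ n, coeff (m + n) f = 0) {s : Finset σ} (hm : ∀ i ∈ s, m i = 0) (n : σ →₀ ℕ) :
    coeff (m + n) (blockNormSq 𝕜 s * f) = 0 := by
  rw [blockNormSq, Finset.sum_mul, coeff_sum]
  refine Finset.sum_eq_zero fun i hi ↦ ?_
  rw [pow_two, mul_assoc]
  exact coeff_add_X_mul_eq_zero (coeff_add_X_mul_eq_zero hf (hm i hi)) (hm i hi) n

lemma pderiv_blockNormSq [DecidableEq σ] (s : Finset σ) (i : σ) :
    pderiv i (blockNormSq 𝕜 s) = if i ∈ s then C 2 * X i else 0 := by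
  simp [blockNormSq, pderiv_X, Pi.single_apply, map_ofNat C 2]

lemma sum_mul_pderiv_blockNormSq [Fintype σ] (R : σ → MvPolynomial σ 𝕜) (s : Finset σ) :
    ∑ i, R i * pderiv i (blockNormSq 𝕜 s) = C 2 * radialPairing s R := by
  classical
  simp only [pderiv_blockNormSq, mul_ite, mul_zero, Finset.sum_ite_mem, Finset.univ_inter,
    radialPairing, Finset.mul_sum]
  exact Finset.sum_congr rfl fun i _ ↦ by ring

variable [DecidableEq σ]

lemma coeff_radialPairing (s : Finset σ) (R : σ → MvPolynomial σ 𝕜) (m : σ →₀ ℕ) :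
    coeff m (radialPairing s R) =
      ∑ i ∈ m.support, if i ∈ s then coeff (m - single i 1) (R i) else 0 := by
  simp only [radialPairing, coeff_sum, coeff_X_mul', ← Finset.sum_filter,
    Finset.filter_mem_eq_inter, Finset.inter_comm]

lemma coeff_single_radialPairing (s : Finset σ) (R : σ → MvPolynomial σ 𝕜) (i : σ) :
    coeff (single i 1) (radialPairing s R) = if i ∈ s then coeff 0 (R i) else 0 := by
  have hsupp : (single i 1 : σ →₀ ℕ).support = {i} := by simp
  rw [coeff_radialPairing, hsupp, Finset.sum_singleton, tsub_self]

lemma coeff_sq_radialPairing (s : Finset σ) (R : σ → MvPolynomial σ 𝕜) (i : σ) :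
    coeff (single i 1 + single i 1) (radialPairing s R) =
      if i ∈ s then coeff (single i 1) (R i) else 0 := by
  have hsupp : (single i 1 + single i 1 : σ →₀ ℕ).support = {i} := by
    ext x; grind [Finsupp.add_apply]
  rw [coeff_radialPairing, hsupp, Finset.sum_singleton, add_tsub_cancel_right]

lemma coeff_single_add_single_radialPairing (s : Finset σ) (R : σ → MvPolynomial σ 𝕜) {i j : σ}
    (hij : i ≠ j) :
    coeff (single i 1 + single j 1) (radialPairing s R) =
      (if i ∈ s then coeff (single j 1) (R i) else 0) +
        if j ∈ s then coeff (single i 1) (R j) else 0 := by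
  have hsupp : (single i 1 + single j 1 : σ →₀ ℕ).support = {i, j} := by
    ext x; grind [Finsupp.add_apply]
  rw [coeff_radialPairing, hsupp, Finset.sum_pair hij, add_tsub_cancel_left, add_tsub_cancel_right]

lemma coeff_cube_radialPairing (s : Finset σ) (R : σ → MvPolynomial σ 𝕜) (i : σ) :
    coeff (single i 1 + single i 1 + single i 1) (radialPairing s R) =
      if i ∈ s then coeff (single i 1 + single i 1) (R i) else 0 := by
  have hsupp : (single i 1 + single i 1 + single i 1 : σ →₀ ℕ).support = {i} := by
    ext x; grind [Finsupp.add_apply]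
  rw [coeff_radialPairing, hsupp, Finset.sum_singleton, add_tsub_cancel_right]

lemma coeff_single_add_sq_radialPairing (s : Finset σ) (R : σ → MvPolynomial σ 𝕜) {i j : σ}
    (hij : i ≠ j) :
    coeff (single i 1 + single j 1 + single j 1) (radialPairing s R) =
      (if i ∈ s then coeff (single j 1 + single j 1) (R i) else 0) +
        if j ∈ s then coeff (single i 1 + single j 1) (R j) else 0 := by
  have hsupp : (single i 1 + single j 1 + single j 1 : σ →₀ ℕ).support = {i, j} := by
    ext x; grind [Finsupp.add_apply]
  rw [coeff_radialPairing, hsupp, Finset.sum_pair hij, add_tsub_cancel_right, add_assoc,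
    add_tsub_cancel_left]

lemma coeff_triple_radialPairing (s : Finset σ) (R : σ → MvPolynomial σ 𝕜) {i j k : σ}
    (hij : i ≠ j) (hjk : j ≠ k) (hik : i ≠ k) :
    coeff (single i 1 + single j 1 + single k 1) (radialPairing s R) =
      (if i ∈ s then coeff (single j 1 + single k 1) (R i) else 0) +
        (if j ∈ s then coeff (single i 1 + single k 1) (R j) else 0) +
          if k ∈ s then coeff (single i 1 + single j 1) (R k) else 0 := by
  have hsupp : (single i 1 + single j 1 + single k 1 : σ →₀ ℕ).support = {i, j, k} := by
    ext x; grind [Finsupp.add_apply]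
  have hi : (single i 1 + single j 1 + single k 1 : σ →₀ ℕ) - single i 1 =
      single j 1 + single k 1 := by
    rw [add_assoc, add_tsub_cancel_left]
  have hj : (single i 1 + single j 1 + single k 1 : σ →₀ ℕ) - single j 1 =
      single i 1 + single k 1 := by
    rw [add_right_comm, add_tsub_cancel_right]
  rw [coeff_radialPairing, hsupp, Finset.sum_insert (by simp [hij, hik]), Finset.sum_pair hjk,
    hi, hj, add_tsub_cancel_right, add_assoc]

lemma coeff_single_X_mul (f : MvPolynomial σ 𝕜) (i j : σ) :
    coeff (single j 1) (X i * f) = if i = j then coeff 0 f else 0 := by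
  rw [coeff_X_mul']
  obtain rfl | hij := eq_or_ne i j <;> simp [*, eq_comm]

lemma coeff_single_add_single_X_mul (f : MvPolynomial σ 𝕜) (i j k : σ) :
    coeff (single j 1 + single k 1) (X i * f) =
      if i = j then coeff (single k 1) f else if i = k then coeff (single j 1) f else 0 := by
  rw [coeff_X_mul']
  obtain rfl | hij := eq_or_ne i j
  · simp
  obtain rfl | hik := eq_or_ne i k
  · simp [hij]
  · simp [hij, hik]

end RadialPairing

section RadialIdentity

variable {σ 𝕜 : Type*} [CommSemiring 𝕜]

/-- The coefficients of `r ∑ i ∈ s, xᵢ Rᵢ` and `(∑ i ∈ s, xᵢ²) K` agree at every monomial that is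
divisible by some `xᵢ xⱼ` with `i, j ∈ s`. Both blocks of variables of the sphere product satisfy
such an identity, with `r = 4` and `r = 2` respectively. -/
def RadialIdentity (s : Finset σ) (r : 𝕜) (R : σ → MvPolynomial σ 𝕜) (K : MvPolynomial σ 𝕜) :
    Prop :=
  ∀ i ∈ s, ∀ j ∈ s, ∀ n, r * coeff (single i 1 + single j 1 + n) (radialPairing s R) =
    coeff (single i 1 + single j 1 + n) (blockNormSq 𝕜 s * K)

variable {s : Finset σ} {r : 𝕜} {R : σ → MvPolynomial σ 𝕜} {K : MvPolynomial σ 𝕜}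
  {i j k : σ}

lemma mul_coeff_zero_of_C_mul_radialPairing_eq
    (h : C r * radialPairing s R = blockNormSq 𝕜 s * K) (hi : i ∈ s) :
    r * coeff 0 (R i) = 0 := by
  classical
  have hcoeff := congrArg (coeff (single i 1)) h
  simpa only [coeff_C_mul, blockNormSq_mul, coeff_single_radialPairing, if_pos hi,
    coeff_zero_X_mul] using hcoeff

namespace RadialIdentity

lemma of_C_mul_radialPairing_eq (h : C r * radialPairing s R = blockNormSq 𝕜 s * K) :
    RadialIdentity s r R K :=
  fun _ _ _ _ _ ↦ by rw [← coeff_C_mul, h]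

lemma mul_coeff_sq (h : RadialIdentity s r R K) (hi : i ∈ s) :
    r * coeff (single i 1 + single i 1) (R i) = coeff (single i 1) K := by
  classical
  simpa [blockNormSq_mul, coeff_cube_radialPairing, coeff_single_add_single_X_mul, hi]
    using h i hi i hi (single i 1)

lemma mul_coeff_sq_add (h : RadialIdentity s r R K) (hij : i ≠ j) (hi : i ∈ s) (hj : j ∈ s) :
    r * (coeff (single j 1 + single j 1) (R i) + coeff (single i 1 + single j 1) (R j)) =
      coeff (single i 1) K := by
  classical
  simpa [blockNormSq_mul, coeff_single_add_sq_radialPairing, coeff_single_add_single_X_mul, hij,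
    hij.symm, hi, hj] using h i hi j hj (single j 1)

variable [NoZeroDivisors 𝕜]

lemma coeff_single_add_coeff_single (h : RadialIdentity s r R K) (hr : r ≠ 0)
    (hK : coeff 0 K = 0) (hi : i ∈ s) (hj : j ∈ s) :
    coeff (single j 1) (R i) + coeff (single i 1) (R j) = 0 := by
  classical
  have hij := h i hi j hj 0
  obtain rfl | hne := eq_or_ne i j
  · simp_all [blockNormSq_mul, coeff_sq_radialPairing, coeff_single_X_mul]
  · simpa [blockNormSq_mul, coeff_single_add_single_radialPairing, coeff_single_X_mul, *,
      hne.symm] using hij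

lemma coeff_triple (h : RadialIdentity s r R K) (hr : r ≠ 0) (hij : i ≠ j) (hjk : j ≠ k)
    (hik : i ≠ k) (hi : i ∈ s) (hj : j ∈ s) (hk : k ∈ s) :
    coeff (single j 1 + single k 1) (R i) + coeff (single i 1 + single k 1) (R j) +
      coeff (single i 1 + single j 1) (R k) = 0 := by
  classical
  simpa [blockNormSq_mul, coeff_triple_radialPairing, coeff_single_add_single_X_mul, hij,
    hij.symm, hjk, hjk.symm, hik, hik.symm, hi, hj, hk, hr] using h i hi j hj (single k 1)

lemma coeff_mixed (h : RadialIdentity s r R K) (hr : r ≠ 0) (hij : i ≠ j) (hi : i ∈ s)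
    (hj : j ∈ s) (hk : k ∉ s) :
    coeff (single j 1 + single k 1) (R i) + coeff (single i 1 + single k 1) (R j) = 0 := by
  classical
  have hik : i ≠ k := ne_of_mem_of_not_mem hi hk
  have hjk : j ≠ k := ne_of_mem_of_not_mem hj hk
  simpa [blockNormSq_mul, coeff_triple_radialPairing, coeff_single_add_single_X_mul, hij,
    hij.symm, hjk, hik, hi, hj, hk, hr] using h i hi j hj (single k 1)

end RadialIdentity

end RadialIdentity

section Domain

variable {σ 𝕜 : Type*} [CommRing 𝕜] [IsDomain 𝕜]

lemma totalDegree_le_of_totalDegree_mul_le {f g : MvPolynomial σ 𝕜} {d : ℕ} (hg : g ≠ 0)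
    (h : (f * g).totalDegree ≤ d + g.totalDegree) : f.totalDegree ≤ d := by
  obtain rfl | hf := eq_or_ne f 0
  · simp
  · rw [totalDegree_mul_of_isDomain hf hg] at h
    lia

lemma totalDegree_blockNormSq {s : Finset σ} (hs : s.Nonempty) :
    (blockNormSq 𝕜 s).totalDegree = 2 := by
  classical
  obtain ⟨i, hi⟩ := hs
  refine (isHomogeneous_blockNormSq s).totalDegree (ne_zero_iff.2 ⟨single i 1 + single i 1, ?_⟩)
  rw [← mul_one (blockNormSq 𝕜 s), blockNormSq_mul, coeff_sq_radialPairing, if_pos hi,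
    coeff_single_X_mul, if_pos rfl, coeff_zero_one]
  exact one_ne_zero

lemma totalDegree_blockNormSq_sub_C {s : Finset σ} (hs : s.Nonempty) (c : 𝕜) :
    (blockNormSq 𝕜 s - C c).totalDegree = 2 := by
  rw [sub_eq_add_neg, ← C_neg, totalDegree_add_eq_left_of_totalDegree_lt,
    totalDegree_blockNormSq hs]
  rw [totalDegree_C, totalDegree_blockNormSq hs]
  exact two_pos

lemma blockNormSq_sub_C_ne_zero {s : Finset σ} (hs : s.Nonempty) (c : 𝕜) :
    blockNormSq 𝕜 s - C c ≠ 0 := by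
  intro h
  simpa [h] using totalDegree_blockNormSq_sub_C hs c

end Domain

section SphereProduct

variable {σ 𝕜 : Type*} [Fintype σ] [DecidableEq σ] [CommRing 𝕜]

/-- The polynomial `(∑ i ∈ s, xᵢ² - c)² + ∑ i ∉ s, xᵢ² - 1`. The hypersurface
`S_{p,q}`, which is diffeomorphic to a product of two spheres, is the zero set in the case
`#s = p + 1`, `#sᶜ = q`, `c = a²`. -/
noncomputable def sphereProduct (s : Finset σ) (c : 𝕜) : MvPolynomial σ 𝕜 :=
  (blockNormSq 𝕜 s - C c) ^ 2 + blockNormSq 𝕜 sᶜ - 1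

lemma sum_mul_pderiv_sphereProduct (R : σ → MvPolynomial σ 𝕜) (s : Finset σ) (c : 𝕜) :
    ∑ i, R i * pderiv i (sphereProduct s c) =
      C 4 * radialPairing s R * (blockNormSq 𝕜 s - C c) + C 2 * radialPairing sᶜ R := by
  have hpderiv (i : σ) : R i * pderiv i (sphereProduct s c) =
      C 2 * (blockNormSq 𝕜 s - C c) * (R i * pderiv i (blockNormSq 𝕜 s)) +
        R i * pderiv i (blockNormSq 𝕜 sᶜ) := by
    simp only [sphereProduct, map_sub, map_add, Derivation.leibniz_pow, pderiv_one, pderiv_C,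
      smul_eq_mul, nsmul_eq_mul, map_ofNat]
    push_cast
    ring
  simp only [hpderiv, Finset.sum_add_distrib, ← Finset.mul_sum, sum_mul_pderiv_blockNormSq,
    map_ofNat]
  ring

variable {s : Finset σ} {c : 𝕜} {R : σ → MvPolynomial σ 𝕜} {K L : MvPolynomial σ 𝕜}

lemma coeff_blockNormSq_mul_remainder
    (hQ : C 2 * radialPairing sᶜ R =
      blockNormSq 𝕜 sᶜ * K - K - blockNormSq 𝕜 s * L + C c * L)
    {m : σ →₀ ℕ} (hm : ∀ i ∈ sᶜ, m i = 0) :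
    coeff m (blockNormSq 𝕜 s * L) = c * coeff m L - coeff m K := by
  have h := congrArg (coeff m) hQ
  simp only [coeff_C_mul, coeff_add, coeff_sub, coeff_radialPairing_eq_zero hm,
    coeff_blockNormSq_mul_eq_zero hm] at h
  linear_combination h

lemma coeff_remainder_eq_zero (hs : s.Nonempty) (hKdeg : K.totalDegree ≤ 1)
    (hLdeg : L.totalDegree ≤ 1)
    (hQ : C 2 * radialPairing sᶜ R =
      blockNormSq 𝕜 sᶜ * K - K - blockNormSq 𝕜 s * L + C c * L) :
    coeff 0 L = 0 ∧ ∀ i ∈ s, coeff (single i 1) L = 0 := by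
  have hne {i j : σ} (hi : i ∈ s) (hj : j ∈ sᶜ) : i ≠ j :=
    ne_of_mem_of_not_mem hi (Finset.mem_compl.1 hj)
  constructor
  · obtain ⟨i, hi⟩ := hs
    have h := coeff_blockNormSq_mul_remainder hQ (m := single i 1 + single i 1)
      fun j hj ↦ by simp [hne hi hj]
    rwa [blockNormSq_mul, coeff_sq_radialPairing, if_pos hi, coeff_single_X_mul, if_pos rfl,
      coeff_single_add_single_eq_zero hKdeg, coeff_single_add_single_eq_zero hLdeg, mul_zero,
      sub_zero] at h
  · intro i hi
    have h := coeff_blockNormSq_mul_remainder hQ (m := single i 1 + single i 1 + single i 1)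
      fun j hj ↦ by simp [hne hi hj]
    rwa [blockNormSq_mul, coeff_cube_radialPairing, if_pos hi, coeff_single_add_single_X_mul,
      if_pos rfl, coeff_single_add_single_add_eq_zero hKdeg,
      coeff_single_add_single_add_eq_zero hLdeg, mul_zero, sub_zero] at h

lemma coeff_cofactor_eq_zero (hs : s.Nonempty) (hKdeg : K.totalDegree ≤ 1)
    (hLdeg : L.totalDegree ≤ 1)
    (hQ : C 2 * radialPairing sᶜ R =
      blockNormSq 𝕜 sᶜ * K - K - blockNormSq 𝕜 s * L + C c * L) :
    coeff 0 K = 0 ∧ ∀ i ∈ s, coeff (single i 1) K = 0 := by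
  obtain ⟨hL₀, hL₁⟩ := coeff_remainder_eq_zero hs hKdeg hLdeg hQ
  constructor
  · have h := coeff_blockNormSq_mul_remainder hQ (m := 0) fun _ _ ↦ rfl
    rw [coeff_blockNormSq_mul_eq_zero fun _ _ ↦ rfl, hL₀] at h
    linear_combination h
  · intro i hi
    have h := coeff_blockNormSq_mul_remainder hQ (m := single i 1)
      fun j hj ↦ by simp [ne_of_mem_of_not_mem hi (Finset.mem_compl.1 hj)]
    rw [blockNormSq_mul, coeff_single_radialPairing, if_pos hi, coeff_zero_X_mul, hL₁ i hi] at h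
    linear_combination h

lemma remainder_eq_C_mul_cofactor (hs : s.Nonempty) (hKdeg : K.totalDegree ≤ 1)
    (hLdeg : L.totalDegree ≤ 1)
    (hP : C 4 * radialPairing s R = blockNormSq 𝕜 s * K - C c * K + L)
    (hQ : C 2 * radialPairing sᶜ R =
      blockNormSq 𝕜 sᶜ * K - K - blockNormSq 𝕜 s * L + C c * L) :
    L = C c * K := by
  obtain ⟨hL₀, hL₁⟩ := coeff_remainder_eq_zero hs hKdeg hLdeg hQ
  obtain ⟨hK₀, hK₁⟩ := coeff_cofactor_eq_zero hs hKdeg hLdeg hQ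
  refine ext_of_totalDegree_le_one hLdeg ((totalDegree_C_mul_le _ _).trans hKdeg)
    (by rw [coeff_C_mul, hL₀, hK₀, mul_zero]) fun i ↦ ?_
  by_cases hi : i ∈ s
  · rw [coeff_C_mul, hL₁ i hi, hK₁ i hi, mul_zero]
  · have hm : ∀ j ∈ s, (single i 1 : σ →₀ ℕ) j = 0 := fun j hj ↦ by
      simp [ne_of_mem_of_not_mem hj hi]
    have h := congrArg (coeff (single i 1)) hP
    simp only [coeff_C_mul, coeff_add, coeff_sub, coeff_radialPairing_eq_zero hm,
      coeff_blockNormSq_mul_eq_zero hm] at h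
    rw [coeff_C_mul]
    linear_combination -h

variable [IsDomain 𝕜]

lemma totalDegree_sphereProduct (hs : s.Nonempty) (c : 𝕜) :
    (sphereProduct s c).totalDegree = 4 := by
  have hlead : ((blockNormSq 𝕜 s - C c) ^ 2).totalDegree = 4 := by
    rw [pow_two, totalDegree_mul_of_isDomain (blockNormSq_sub_C_ne_zero hs c)
      (blockNormSq_sub_C_ne_zero hs c), totalDegree_blockNormSq_sub_C hs]
  have hrest : (blockNormSq 𝕜 sᶜ - C 1).totalDegree ≤ 2 :=
    (totalDegree_sub_C_le _ _).trans (isHomogeneous_blockNormSq sᶜ).totalDegree_le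
  rw [sphereProduct, add_sub_assoc, ← C_1, totalDegree_add_eq_left_of_totalDegree_lt, hlead]
  lia

lemma totalDegree_cofactor_le (hs : s.Nonempty) (hR : ∀ i, (R i).totalDegree ≤ 2)
    (hK : ∑ i, R i * pderiv i (sphereProduct s c) = K * sphereProduct s c) :
    K.totalDegree ≤ 1 := by
  have hne : sphereProduct s c ≠ 0 := fun h ↦ by simpa [h] using totalDegree_sphereProduct hs c
  have hP : (C 4 * radialPairing s R).totalDegree ≤ 3 := (totalDegree_C_mul_le _ _).trans
    (totalDegree_radialPairing_le fun i _ ↦ hR i)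
  have hQ : (C 2 * radialPairing sᶜ R).totalDegree ≤ 3 := (totalDegree_C_mul_le _ _).trans
    (totalDegree_radialPairing_le fun i _ ↦ hR i)
  refine totalDegree_le_of_totalDegree_mul_le hne ?_
  rw [← hK, sum_mul_pderiv_sphereProduct, totalDegree_sphereProduct hs]
  have hY := totalDegree_blockNormSq_sub_C hs c
  have hPY := totalDegree_mul (C 4 * radialPairing s R) (blockNormSq 𝕜 s - C c)
  exact (totalDegree_add _ _).trans (by lia)

lemma exists_affine_remainder (hs : s.Nonempty) (hR : ∀ i, (R i).totalDegree ≤ 2)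
    (hK : ∑ i, R i * pderiv i (sphereProduct s c) = K * sphereProduct s c) :
    ∃ L : MvPolynomial σ 𝕜, L.totalDegree ≤ 1 ∧
      C 4 * radialPairing s R = blockNormSq 𝕜 s * K - C c * K + L ∧
      C 2 * radialPairing sᶜ R = blockNormSq 𝕜 sᶜ * K - K - blockNormSq 𝕜 s * L + C c * L := by
  have hfact : (C 4 * radialPairing s R - (blockNormSq 𝕜 s - C c) * K) *
      (blockNormSq 𝕜 s - C c) = (blockNormSq 𝕜 sᶜ - C 1) * K - C 2 * radialPairing sᶜ R := by
    rw [sum_mul_pderiv_sphereProduct, sphereProduct] at hK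
    rw [C_1]
    linear_combination hK
  refine ⟨C 4 * radialPairing s R - (blockNormSq 𝕜 s - C c) * K,
    totalDegree_le_of_totalDegree_mul_le (blockNormSq_sub_C_ne_zero hs c) ?_, by ring, ?_⟩
  · have hV : (blockNormSq 𝕜 sᶜ - C 1).totalDegree ≤ 2 :=
      (totalDegree_sub_C_le _ _).trans (isHomogeneous_blockNormSq sᶜ).totalDegree_le
    have hQ : (C 2 * radialPairing sᶜ R).totalDegree ≤ 3 := (totalDegree_C_mul_le _ _).trans
      (totalDegree_radialPairing_le fun i _ ↦ hR i)
    have hVK := totalDegree_mul (blockNormSq 𝕜 sᶜ - C 1) K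
    have hKdeg := totalDegree_cofactor_le hs hR hK
    rw [hfact, totalDegree_blockNormSq_sub_C hs]
    exact (totalDegree_sub _ _).trans (by lia)
  · rw [C_1] at hfact
    linear_combination hfact

lemma cofactor_and_radialPairing_eq (hs : s.Nonempty)
    (hR : ∀ i, (R i).totalDegree ≤ 2)
    (hK : ∑ i, R i * pderiv i (sphereProduct s c) = K * sphereProduct s c) :
    coeff 0 K = 0 ∧ (∀ i ∈ s, coeff (single i 1) K = 0) ∧
      C 4 * radialPairing s R = blockNormSq 𝕜 s * K ∧
      C 2 * radialPairing sᶜ R =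
        blockNormSq 𝕜 sᶜ * K - C c * (blockNormSq 𝕜 s * K) + C (c ^ 2 - 1) * K := by
  have hKdeg := totalDegree_cofactor_le hs hR hK
  obtain ⟨L, hLdeg, hP, hQ⟩ := exists_affine_remainder hs hR hK
  obtain ⟨hK₀, hK₁⟩ := coeff_cofactor_eq_zero hs hKdeg hLdeg hQ
  have hL := remainder_eq_C_mul_cofactor hs hKdeg hLdeg hP hQ
  refine ⟨hK₀, hK₁, ?_, ?_⟩
  · rw [hP, hL]
    ring
  · rw [hQ, hL, C_sub, C_pow, C_1]
    ring

end SphereProduct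

section Coefficients

variable {σ 𝕜 : Type*} [Fintype σ] [DecidableEq σ] [CommRing 𝕜] {s : Finset σ} {c : 𝕜}
  {R : σ → MvPolynomial σ 𝕜} {K : MvPolynomial σ 𝕜} {i l : σ}

lemma radialIdentity_compl_two (hKdeg : K.totalDegree ≤ 1)
    (hQ : C 2 * radialPairing sᶜ R =
      blockNormSq 𝕜 sᶜ * K - C c * (blockNormSq 𝕜 s * K) + C (c ^ 2 - 1) * K) :
    RadialIdentity sᶜ 2 R K := by
  intro i hi j hj n
  have hij : ∀ k ∈ s, (single i 1 + single j 1 : σ →₀ ℕ) k = 0 := fun k hk ↦ by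
    simp [ne_of_mem_of_not_mem hk (Finset.mem_compl.1 hi),
      ne_of_mem_of_not_mem hk (Finset.mem_compl.1 hj)]
  have hK := coeff_single_add_single_add_eq_zero hKdeg i j
  rw [← coeff_C_mul, hQ, coeff_add, coeff_sub, coeff_C_mul, coeff_C_mul, hK,
    coeff_add_blockNormSq_mul_eq_zero hK hij, mul_zero, mul_zero, sub_zero, add_zero]

lemma two_mul_coeff_zero_of_notMem
    (hQ : C 2 * radialPairing sᶜ R =
      blockNormSq 𝕜 sᶜ * K - C c * (blockNormSq 𝕜 s * K) + C (c ^ 2 - 1) * K)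
    (hl : l ∉ s) :
    2 * coeff 0 (R l) = (c ^ 2 - 1) * coeff (single l 1) K := by
  have h := congrArg (coeff (single l 1)) hQ
  simpa only [blockNormSq_mul, coeff_single_radialPairing, Finset.mem_compl, hl, coeff_C_mul,
    coeff_add, coeff_sub, coeff_zero_X_mul, not_false_eq_true, if_true, if_false, mul_zero,
    sub_zero, zero_add] using h

lemma two_mul_coeff_sq_of_mem_of_notMem (hKdeg : K.totalDegree ≤ 1)
    (hQ : C 2 * radialPairing sᶜ R =
      blockNormSq 𝕜 sᶜ * K - C c * (blockNormSq 𝕜 s * K) + C (c ^ 2 - 1) * K)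
    (hi : i ∈ s) (hl : l ∉ s) :
    2 * coeff (single i 1 + single i 1) (R l) = -c * coeff (single l 1) K := by
  have hli : l ≠ i := (ne_of_mem_of_not_mem hi hl).symm
  have h := congrArg (coeff (single l 1 + single i 1 + single i 1)) hQ
  simpa [blockNormSq_mul, coeff_single_add_sq_radialPairing _ _ hli,
    coeff_single_add_single_X_mul, coeff_single_add_single_add_eq_zero hKdeg, hi, hl, hli,
    hli.symm, ← C_1, ← C_pow, ← C_sub, coeff_C_mul, -map_sub, -map_pow, -map_one] using h

end Coefficients

theorem stmt3_general {σ 𝕜 : Type*} [Fintype σ] [DecidableEq σ] [Field 𝕜] [NeZero (2 : 𝕜)]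
    {s : Finset σ} (hs : s.Nonempty) {c : 𝕜} {R : σ → MvPolynomial σ 𝕜}
    (hdeg : ∀ i, (R i).totalDegree ≤ 2) {K : MvPolynomial σ 𝕜}
    (hinv : ∑ i, R i * pderiv i (sphereProduct s c) = K * sphereProduct s c) :
    (coeff 0 K = 0 ∧ ∀ i ∈ s, coeff (single i 1) K = 0) ∧
    (∀ i j, (i ∈ s ∧ j ∈ s) ∨ (i ∉ s ∧ j ∉ s) →
      coeff (single j 1) (R i) + coeff (single i 1) (R j) = 0) ∧
    ((∀ i ∈ s, coeff 0 (R i) = 0) ∧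
      (∀ l ∉ s, coeff 0 (R l) = (c ^ 2 - 1) / 2 * coeff (single l 1) K)) ∧
    ((∀ i ∈ s, coeff (single i 1 + single i 1) (R i) = coeff (single i 1) K / 4) ∧
      (∀ i l, i ∈ s → l ∉ s →
        coeff (single i 1 + single i 1) (R l) = -c * coeff (single l 1) K / 2) ∧
      (∀ l ∉ s, coeff (single l 1 + single l 1) (R l) = coeff (single l 1) K / 2)) ∧
    ((∀ i j k, i ≠ j → j ≠ k → i ≠ k → i ∈ s → j ∈ s → k ∈ s →
        coeff (single j 1 + single k 1) (R i) + coeff (single i 1 + single k 1) (R j) +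
          coeff (single i 1 + single j 1) (R k) = 0) ∧
      (∀ l m r, l ≠ m → m ≠ r → l ≠ r → l ∉ s → m ∉ s → r ∉ s →
        coeff (single m 1 + single r 1) (R l) + coeff (single l 1 + single r 1) (R m) +
          coeff (single l 1 + single m 1) (R r) = 0)) ∧
    ((∀ i j l, i ≠ j → i ∈ s → j ∈ s → l ∉ s →
        coeff (single j 1 + single l 1) (R i) + coeff (single i 1 + single l 1) (R j) = 0) ∧
      (∀ l m j, l ≠ m → l ∉ s → m ∉ s → j ∈ s →
        coeff (single j 1 + single m 1) (R l) + coeff (single j 1 + single l 1) (R m) = 0)) ∧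
    ((∀ i j, i ≠ j → i ∈ s → j ∈ s →
        4 * (coeff (single j 1 + single j 1) (R i) + coeff (single i 1 + single j 1) (R j)) =
          coeff (single i 1) K) ∧
      (∀ l m, l ≠ m → l ∉ s → m ∉ s →
        2 * (coeff (single m 1 + single m 1) (R l) + coeff (single l 1 + single m 1) (R m)) =
          coeff (single l 1) K)) := by
  have hKdeg := totalDegree_cofactor_le hs hdeg hinv
  obtain ⟨hK₀, hK₁, hP, hQ⟩ := cofactor_and_radialPairing_eq hs hdeg hinv
  have h₂ : (2 : 𝕜) ≠ 0 := two_ne_zero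
  have h₄ : (4 : 𝕜) ≠ 0 := by
    rw [← two_add_two_eq_four, ← two_mul]
    exact mul_ne_zero h₂ h₂
  have hS : RadialIdentity s 4 R K := .of_C_mul_radialPairing_eq hP
  have hT : RadialIdentity sᶜ 2 R K := radialIdentity_compl_two hKdeg hQ
  have hc {l : σ} : l ∉ s → l ∈ sᶜ := Finset.mem_compl.2
  refine ⟨⟨hK₀, hK₁⟩, ?_, ⟨fun i hi ↦ ?_, fun l hl ↦ ?_⟩,
    ⟨fun i hi ↦ ?_, fun i l hi hl ↦ ?_, fun l hl ↦ ?_⟩,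
    ⟨fun i j k hij hjk hik hi hj hk ↦ hS.coeff_triple h₄ hij hjk hik hi hj hk,
      fun l m r hlm hmr hlr hl hm hr ↦ hT.coeff_triple h₂ hlm hmr hlr (hc hl) (hc hm) (hc hr)⟩,
    ⟨fun i j l hij hi hj hl ↦ hS.coeff_mixed h₄ hij hi hj hl, fun l m j hlm hl hm hj ↦ ?_⟩,
    fun i j hij hi hj ↦ hS.mul_coeff_sq_add hij hi hj,
    fun l m hlm hl hm ↦ hT.mul_coeff_sq_add hlm (hc hl) (hc hm)⟩
  · rintro i j (⟨hi, hj⟩ | ⟨hi, hj⟩)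
    · exact hS.coeff_single_add_coeff_single h₄ hK₀ hi hj
    · exact hT.coeff_single_add_coeff_single h₂ hK₀ (hc hi) (hc hj)
  · exact (mul_eq_zero.1 (mul_coeff_zero_of_C_mul_radialPairing_eq hP hi)).resolve_left h₄
  · rw [div_mul_eq_mul_div, eq_div_iff_mul_eq h₂, mul_comm, two_mul_coeff_zero_of_notMem hQ hl]
  · rw [eq_div_iff_mul_eq h₄, mul_comm, hS.mul_coeff_sq hi]
  · rw [eq_div_iff_mul_eq h₂, mul_comm, two_mul_coeff_sq_of_mem_of_notMem hKdeg hQ hi hl]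
  · rw [eq_div_iff_mul_eq h₂, mul_comm, hT.mul_coeff_sq (hc hl)]
  · rw [add_comm (single j 1), add_comm (single j 1)]
    exact hT.coeff_mixed h₂ hlm (hc hl) (hc hm) (by simpa using hj)

/-- The indices in `Fin (p + q + 1)` of the variables `x₁, …, x_{p+1}`. -/
def firstBlock (p q : ℕ) : Finset (Fin (p + q + 1)) := {i | (i : ℕ) < p + 1}

lemma mem_firstBlock {p q : ℕ} {i : Fin (p + q + 1)} : i ∈ firstBlock p q ↔ (i : ℕ) < p + 1 := by
  simp only [firstBlock, Finset.mem_filter, Finset.mem_univ, true_and]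

lemma sum_X_idx1_sq (p q : ℕ) : ∑ i, X (idx1 p q i) ^ 2 = blockNormSq ℝ (firstBlock p q) := by
  refine Finset.sum_bij (fun i _ ↦ idx1 p q i) (fun i _ ↦ mem_firstBlock.2 i.isLt)
    (fun i _ j _ h ↦ ?_) (fun i hi ↦ ?_) fun _ _ ↦ rfl
  · simpa [idx1] using h
  · exact ⟨⟨i, mem_firstBlock.1 hi⟩, Finset.mem_univ _, rfl⟩

lemma sum_X_idx2_sq (p q : ℕ) : ∑ j, X (idx2 p q j) ^ 2 = blockNormSq ℝ (firstBlock p q)ᶜ := by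
  refine Finset.sum_bij (fun j _ ↦ idx2 p q j) (fun j _ ↦ ?_) (fun i _ j _ h ↦ ?_)
    (fun l hl ↦ ?_) fun _ _ ↦ rfl
  · rw [Finset.mem_compl, mem_firstBlock, not_lt]
    exact Nat.le_add_right _ _
  · simpa [idx2, Fin.ext_iff] using h
  · rw [Finset.mem_compl, mem_firstBlock, not_lt] at hl
    exact ⟨⟨l - (p + 1), by lia⟩, Finset.mem_univ _, Fin.ext (Nat.add_sub_of_le hl)⟩

lemma hpq_eq_sphereProduct (p q : ℕ) (a : ℝ) :
    hpq p q a = sphereProduct (firstBlock p q) (a ^ 2) := by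
  rw [hpq, sphereProduct, sum_X_idx1_sq, sum_X_idx2_sq]

/-- Characterization of the coefficients of a degree-two polynomial vector field
`X = Σ Rᵢ ∂/∂xᵢ` defined on `S_{p,q}` with cofactor `K = Σ αₛ xₛ + α₀`.
Here `quadCoeff (R i) j k = βᵢ(j,k)`, `linCoeff (R i) j = βᵢⱼ`,
`constCoeff (R i) = βᵢ₀`, `linCoeff K s = αₛ` and `constCoeff K = α₀`;
indices `< p+1` correspond to `x₁,…,x_{p+1}` and indices `≥ p+1` to `x_{p+2},…,x_n`. -/
theorem stmt3 (p q : ℕ) (hp : 1 ≤ p) (hq : 1 ≤ q) (a : ℝ) (ha : 1 < a)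
    (R : Fin (p+q+1) → MvPolynomial (Fin (p+q+1)) ℝ)
    (hdeg : ∀ i, (R i).totalDegree ≤ 2)
    (K : MvPolynomial (Fin (p+q+1)) ℝ)
    (hKdeg : K.totalDegree ≤ 1)
    (hinv : (∑ i, R i * pderiv i (hpq p q a)) = K * hpq p q a) :
    -- (i) α₀ = 0 and αᵢ = 0 for 1 ≤ i ≤ p+1
    (constCoeff K = 0 ∧ ∀ i : Fin (p+q+1), (i:ℕ) < p+1 → linCoeff K i = 0) ∧
    -- (ii) βᵢⱼ + βⱼᵢ = 0 on both blocks
    (∀ i j : Fin (p+q+1),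
      (((i:ℕ) < p+1 ∧ (j:ℕ) < p+1) ∨ (p+1 ≤ (i:ℕ) ∧ p+1 ≤ (j:ℕ))) →
      linCoeff (R i) j + linCoeff (R j) i = 0) ∧
    -- (iii) constant terms
    ((∀ i : Fin (p+q+1), (i:ℕ) < p+1 → constCoeff (R i) = 0) ∧
     (∀ l : Fin (p+q+1), p+1 ≤ (l:ℕ) →
        constCoeff (R l) = (a^4 - 1)/2 * linCoeff K l)) ∧
    -- (iv) diagonal quadratic coefficients
    ((∀ i : Fin (p+q+1), (i:ℕ) < p+1 → quadCoeff (R i) i i = linCoeff K i / 4) ∧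
     (∀ i l : Fin (p+q+1), (i:ℕ) < p+1 → p+1 ≤ (l:ℕ) →
        quadCoeff (R l) i i = -(a^2) * linCoeff K l / 2) ∧
     (∀ l : Fin (p+q+1), p+1 ≤ (l:ℕ) → quadCoeff (R l) l l = linCoeff K l / 2)) ∧
    -- (v) pairwise distinct triples within each block
    ((∀ i j k : Fin (p+q+1), i ≠ j → j ≠ k → i ≠ k →
        (i:ℕ) < p+1 → (j:ℕ) < p+1 → (k:ℕ) < p+1 →
        quadCoeff (R i) j k + quadCoeff (R j) i k + quadCoeff (R k) i j = 0) ∧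
     (∀ l m r : Fin (p+q+1), l ≠ m → m ≠ r → l ≠ r →
        p+1 ≤ (l:ℕ) → p+1 ≤ (m:ℕ) → p+1 ≤ (r:ℕ) →
        quadCoeff (R l) m r + quadCoeff (R m) l r + quadCoeff (R r) l m = 0)) ∧
    -- (vi) mixed triples
    ((∀ i j l : Fin (p+q+1), i ≠ j → (i:ℕ) < p+1 → (j:ℕ) < p+1 → p+1 ≤ (l:ℕ) →
        quadCoeff (R i) j l + quadCoeff (R j) i l = 0) ∧
     (∀ l m j : Fin (p+q+1), l ≠ m → p+1 ≤ (l:ℕ) → p+1 ≤ (m:ℕ) → (j:ℕ) < p+1 →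
        quadCoeff (R l) j m + quadCoeff (R m) j l = 0)) ∧
    -- (vii) repeated-index pairs
    ((∀ i j : Fin (p+q+1), i ≠ j → (i:ℕ) < p+1 → (j:ℕ) < p+1 →
        4 * (quadCoeff (R i) j j + quadCoeff (R j) i j) = linCoeff K i) ∧
     (∀ l m : Fin (p+q+1), l ≠ m → p+1 ≤ (l:ℕ) → p+1 ≤ (m:ℕ) →
        2 * (quadCoeff (R l) m m + quadCoeff (R m) l m) = linCoeff K l)) := by
  rw [hpq_eq_sphereProduct] at hinv
  simpa only [mem_firstBlock, not_lt, ← pow_mul, constCoeff, linCoeff, quadCoeff] using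
    stmt3_general ⟨0, mem_firstBlock.2 p.succ_pos⟩ hdeg hinv
end

section
/- Let p, q ≥ 2 be integers, a > 1, and let (a₁,…,a_{p+1}) ∈ ℝ^{p+1} be a nonzero vector. Then the meridian S_{p,q} ∩ {x ∈ ℝⁿ : a₁x₁ + ⋯ + a_{p+1}x_{p+1} = 0} is homeomorphic to S^{p−1} × S^q; in particular it is path connected. -/
/-- The hypersurface `S_{p,q} ⊂ ℝ^{p+q+1}` defined by
`(x₁² + ⋯ + x_{p+1}² − a²)² + x_{p+2}² + ⋯ + x_n² = 1`. -/
def Spq (p q : ℕ) (a : ℝ) : Set (Fin (p+q+1) → ℝ) :=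
  {x | ((∑ i : Fin (p+1), x (idx1 p q i) ^ 2) - a^2)^2
        + (∑ j : Fin q, x (idx2 p q j) ^ 2) = 1}

/-! The map `(x, y) ↦ (x / ‖x‖, (‖x‖² - c, y))` is a homeomorphism from the hypersurface
`(‖x‖² - c)² + ‖y‖² = 1` onto a product of two unit spheres: the second component is a unit
vector by the equation itself, so its first coordinate is at least `-1`, and `c > 1` then keeps
`‖x‖² = t + c` away from `0`. A meridian is the hypersurface of the same kind in which `x` is
confined to the hyperplane orthogonal to `(a₁, …, a_{p+1})`. -/

open Metric Module

section ToralHypersurface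

variable {E F : Type*} [NormedAddCommGroup E] [NormedAddCommGroup F]

variable (E F) in
/-- The hypersurface `(‖x‖² - c)² + ‖y‖² = 1` in `E × F`: the coordinate-free form of `Spq`,
with `c` in place of `a²`. -/
def toralHypersurface (c : ℝ) : Set (E × F) :=
  {z | (‖z.1‖ ^ 2 - c) ^ 2 + ‖z.2‖ ^ 2 = 1}

lemma mem_toralHypersurface_iff_norm_eq_one {c : ℝ} {z : E × F} :
    z ∈ toralHypersurface E F c ↔ ‖WithLp.toLp 2 (‖z.1‖ ^ 2 - c, z.2)‖ = 1 := by
  rw [← pow_eq_one_iff_of_nonneg (norm_nonneg _) two_ne_zero, WithLp.prod_norm_sq_eq_of_L2]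
  simp only [toralHypersurface, Set.mem_ofPred_eq, WithLp.toLp_fst, WithLp.toLp_snd,
    Real.norm_eq_abs, sq_abs]

lemma fst_add_pos_of_norm_eq_one {c : ℝ} (hc : 1 < c) {w : WithLp 2 (ℝ × F)} (hw : ‖w‖ = 1) :
    0 < w.fst + c := by
  have h_fst : |w.fst| ≤ 1 := hw ▸ WithLp.norm_fst_le _ w
  linarith [neg_le_of_abs_le h_fst]

lemma norm_fst_pos_of_mem_toralHypersurface {c : ℝ} (hc : 1 < c) {z : E × F}
    (hz : z ∈ toralHypersurface E F c) : 0 < ‖z.1‖ := by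
  have h_sq : 0 < ‖z.1‖ ^ 2 - c + c :=
    fst_add_pos_of_norm_eq_one hc (mem_toralHypersurface_iff_norm_eq_one.1 hz)
  rw [sub_add_cancel] at h_sq
  exact (sq_pos_iff.1 h_sq).lt_of_le' (norm_nonneg _)

variable [NormedSpace ℝ E]

lemma norm_sqrt_smul_of_norm_eq_one {r : ℝ} {u : E} (hu : ‖u‖ = 1) : ‖√r • u‖ = √r := by
  rw [norm_smul, hu, mul_one, Real.norm_of_nonneg (Real.sqrt_nonneg r)]

lemma sq_norm_sqrt_smul_sub {c : ℝ} (hc : 1 < c) {u : E} {w : WithLp 2 (ℝ × F)}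
    (hu : ‖u‖ = 1) (hw : ‖w‖ = 1) : ‖√(w.fst + c) • u‖ ^ 2 - c = w.fst := by
  rw [norm_sqrt_smul_of_norm_eq_one hu, Real.sq_sqrt (fst_add_pos_of_norm_eq_one hc hw).le,
    add_sub_cancel_right]

variable (E F) in
/-- The hypersurface `(‖x‖² - c)² + ‖y‖² = 1` as a product of spheres, for `c > 1`, through
`(x, y) ↦ (x / ‖x‖, (‖x‖² - c, y))`. The second sphere lies in `ℝ × F` with the `L²` norm. -/
noncomputable def toralHypersurfaceHomeomorph {c : ℝ} (hc : 1 < c) :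
    toralHypersurface E F c ≃ₜ sphere (0 : E) 1 × sphere (0 : WithLp 2 (ℝ × F)) 1 where
  toFun z :=
    (⟨‖z.1.1‖⁻¹ • z.1.1, by
      rw [mem_sphere_zero_iff_norm, norm_smul, norm_inv, norm_norm,
        inv_mul_cancel₀ (norm_fst_pos_of_mem_toralHypersurface hc z.2).ne']⟩,
     ⟨WithLp.toLp 2 (‖z.1.1‖ ^ 2 - c, z.1.2),
      mem_sphere_zero_iff_norm.2 (mem_toralHypersurface_iff_norm_eq_one.1 z.2)⟩)
  invFun s :=
    ⟨(√(s.2.1.fst + c) • s.1.1, s.2.1.snd), by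
      have hu := mem_sphere_zero_iff_norm.1 s.1.2
      have hw := mem_sphere_zero_iff_norm.1 s.2.2
      rw [mem_toralHypersurface_iff_norm_eq_one, sq_norm_sqrt_smul_sub hc hu hw]
      exact hw⟩
  left_inv := by
    rintro ⟨⟨x, y⟩, hz⟩
    have hx : ‖x‖ ≠ 0 := (norm_fst_pos_of_mem_toralHypersurface hc hz).ne'
    simp [smul_smul, hx]
  right_inv := by
    rintro ⟨⟨u, hu⟩, ⟨w, hw⟩⟩
    rw [mem_sphere_zero_iff_norm] at hu hw
    have h_sqrt : √(w.fst + c) ≠ 0 := (Real.sqrt_pos.2 (fst_add_pos_of_norm_eq_one hc hw)).ne'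
    refine Prod.ext (Subtype.ext ?_) (Subtype.ext ?_)
    · change ‖√(w.fst + c) • u‖⁻¹ • √(w.fst + c) • u = u
      rw [norm_sqrt_smul_of_norm_eq_one hu, inv_smul_smul₀ h_sqrt]
    · change WithLp.toLp 2 (‖√(w.fst + c) • u‖ ^ 2 - c, w.snd) = w
      rw [sq_norm_sqrt_smul_sub hc hu hw]
      rfl
  continuous_toFun := by
    have h_inv : Continuous fun z : toralHypersurface E F c => ‖z.1.1‖⁻¹ :=
      Continuous.inv₀ (by fun_prop) fun z => (norm_fst_pos_of_mem_toralHypersurface hc z.2).ne'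
    fun_prop
  continuous_invFun := by fun_prop

variable (F) in
/-- Restricting the first variable to a subspace `K` yields the toral hypersurface of `K × F`. -/
def toralHypersurfaceInterHomeomorph (K : Submodule ℝ E) (c : ℝ) :
    ↥(toralHypersurface E F c ∩ {z | z.1 ∈ K}) ≃ₜ toralHypersurface K F c where
  toFun z := ⟨(⟨z.1.1, z.2.2⟩, z.1.2), z.2.1⟩
  invFun z := ⟨(z.1.1, z.1.2), z.2, z.1.1.2⟩
  continuous_toFun := by fun_prop
  continuous_invFun := by fun_prop

end ToralHypersurface

section Spheres

/-- The unit sphere of an `n`-dimensional inner product space is the standard `(n - 1)`-sphere,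
by the choice of an orthonormal basis. -/
noncomputable def sphereHomeomorphOfFinrankEq {V : Type*} [NormedAddCommGroup V]
    [InnerProductSpace ℝ V] [FiniteDimensional ℝ V] {n : ℕ} (hn : finrank ℝ V = n) :
    sphere (0 : V) 1 ≃ₜ sphere (0 : EuclideanSpace ℝ (Fin n)) 1 :=
  let b := (stdOrthonormalBasis ℝ V).reindex (finCongr hn)
  b.repr.toHomeomorph.subtype fun v => by simp

lemma finrank_withLp_real_prod (F : Type*) [AddCommGroup F] [Module ℝ F]
    [FiniteDimensional ℝ F] : finrank ℝ (WithLp 2 (ℝ × F)) = finrank ℝ F + 1 := by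
  rw [(WithLp.linearEquiv 2 ℝ (ℝ × F)).finrank_eq, finrank_prod, finrank_self, add_comm]

lemma pathConnectedSpace_sphere_euclideanSpace {n : ℕ} (hn : 2 ≤ n) :
    PathConnectedSpace (sphere (0 : EuclideanSpace ℝ (Fin n)) 1) := by
  have h_rank : 1 < Module.rank ℝ (EuclideanSpace ℝ (Fin n)) := by
    rw [← finrank_eq_rank, finrank_euclideanSpace_fin]
    exact_mod_cast hn
  exact isPathConnected_iff_pathConnectedSpace.1 (isPathConnected_sphere h_rank 0 zero_le_one)

end Spheres

section Meridian

variable (p q : ℕ)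

/-- The splitting of the coordinates into the blocks `idx1` and `idx2`. -/
def blockEquiv : Fin (p + 1) ⊕ Fin q ≃ Fin (p + q + 1) :=
  finSumFinEquiv.trans (finCongr (Nat.add_right_comm p 1 q))

/-- The splitting `ℝ^{p+q+1} = ℝ^{p+1} × ℝ^q` along the blocks `idx1` and `idx2`. -/
def blockHomeomorph : (Fin (p + q + 1) → ℝ) ≃ₜ
    EuclideanSpace ℝ (Fin (p + 1)) × EuclideanSpace ℝ (Fin q) :=
  (Homeomorph.piCongrLeft (blockEquiv p q)).symm.trans <|
    (Homeomorph.sumPiEquivProdPi _ _ _).trans <|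
      (PiLp.homeomorph 2 _).symm.prodCongr (PiLp.homeomorph 2 _).symm

variable {p q}

lemma blockHomeomorph_fst_apply (x : Fin (p + q + 1) → ℝ) (i : Fin (p + 1)) :
    (blockHomeomorph p q x).1 i = x (idx1 p q i) := rfl

lemma blockHomeomorph_snd_apply (x : Fin (p + q + 1) → ℝ) (j : Fin q) :
    (blockHomeomorph p q x).2 j = x (idx2 p q j) := rfl

lemma blockHomeomorph_mem_toralHypersurface_iff {a : ℝ} {x : Fin (p + q + 1) → ℝ} :
    blockHomeomorph p q x ∈ toralHypersurface _ _ (a ^ 2) ↔ x ∈ Spq p q a := by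
  simp only [toralHypersurface, Spq, Set.mem_ofPred_eq, EuclideanSpace.real_norm_sq_eq,
    blockHomeomorph_fst_apply, blockHomeomorph_snd_apply]

lemma blockHomeomorph_fst_mem_orthogonal_iff {v : Fin (p + 1) → ℝ} {x : Fin (p + q + 1) → ℝ} :
    (blockHomeomorph p q x).1 ∈ (ℝ ∙ WithLp.toLp 2 v)ᗮ ↔ ∑ i, v i * x (idx1 p q i) = 0 := by
  simp only [Submodule.mem_orthogonal_singleton_iff_inner_right, PiLp.inner_apply,
    blockHomeomorph_fst_apply, Real.inner_apply]

variable (p q) in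
/-- The meridian of `Spq` orthogonal to `v`, as a product of standard spheres. -/
noncomputable def meridianHomeomorph {a : ℝ} (ha : 1 < |a|) {v : Fin (p + 1) → ℝ} (hv : v ≠ 0) :
    ↥(Spq p q a ∩ {x | ∑ i, v i * x (idx1 p q i) = 0}) ≃ₜ
      sphere (0 : EuclideanSpace ℝ (Fin p)) 1 × sphere (0 : EuclideanSpace ℝ (Fin (q + 1))) 1 :=
  let K := (ℝ ∙ WithLp.toLp 2 v)ᗮ
  have : Fact (finrank ℝ (EuclideanSpace ℝ (Fin (p + 1))) = p + 1) := ⟨finrank_euclideanSpace_fin⟩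
  have hK : finrank ℝ K = p :=
    Submodule.finrank_orthogonal_span_singleton ((WithLp.toLp_eq_zero 2).not.2 hv)
  have h_fin : finrank ℝ (WithLp 2 (ℝ × EuclideanSpace ℝ (Fin q))) = q + 1 := by
    rw [finrank_withLp_real_prod, finrank_euclideanSpace_fin]
  ((blockHomeomorph p q).subtype fun _ =>
      (and_congr blockHomeomorph_mem_toralHypersurface_iff
        blockHomeomorph_fst_mem_orthogonal_iff).symm).trans <|
    (toralHypersurfaceInterHomeomorph _ K (a ^ 2)).trans <|
      (toralHypersurfaceHomeomorph K _ ((one_lt_sq_iff_one_lt_abs a).2 ha)).trans <|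
        (sphereHomeomorphOfFinrankEq hK).prodCongr (sphereHomeomorphOfFinrankEq h_fin)

lemma isPathConnected_meridian (hp : 2 ≤ p) (hq : 1 ≤ q) {a : ℝ} (ha : 1 < |a|)
    {v : Fin (p + 1) → ℝ} (hv : v ≠ 0) :
    IsPathConnected (Spq p q a ∩ {x | ∑ i, v i * x (idx1 p q i) = 0}) := by
  have := pathConnectedSpace_sphere_euclideanSpace hp
  have := pathConnectedSpace_sphere_euclideanSpace (Nat.succ_le_succ hq)
  let e := (meridianHomeomorph p q ha hv).symm
  exact isPathConnected_iff_pathConnectedSpace.2 (e.surjective.pathConnectedSpace e.continuous)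

end Meridian

theorem stmt5_general (p q : ℕ) (a : ℝ) (ha : 1 < |a|) (av : Fin (p + 1) → ℝ) (hav : av ≠ 0) :
    Nonempty (↥(Spq p q a ∩ {x | ∑ i : Fin (p + 1), av i * x (idx1 p q i) = 0}) ≃ₜ
      (↥(sphere (0 : EuclideanSpace ℝ (Fin p)) 1) ×
       ↥(sphere (0 : EuclideanSpace ℝ (Fin (q + 1))) 1))) ∧
    (2 ≤ p → 1 ≤ q →
      IsPathConnected (Spq p q a ∩ {x | ∑ i : Fin (p + 1), av i * x (idx1 p q i) = 0})) :=
  ⟨⟨meridianHomeomorph p q ha hav⟩, fun hp hq => isPathConnected_meridian hp hq ha hav⟩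

/-- For `p, q ≥ 2` and a nonzero `(a₁,…,a_{p+1}) ∈ ℝ^{p+1}`, the meridian
`S_{p,q} ∩ {a₁x₁ + ⋯ + a_{p+1}x_{p+1} = 0}` is homeomorphic to `S^{p−1} × S^q`;
in particular it is path connected. -/
theorem stmt5 (p q : ℕ) (hp : 2 ≤ p) (hq : 2 ≤ q) (a : ℝ) (ha : 1 < a)
    (av : Fin (p+1) → ℝ) (hav : av ≠ 0) :
    Nonempty (↥(Spq p q a ∩ {x | ∑ i : Fin (p+1), av i * x (idx1 p q i) = 0}) ≃ₜ
      (↥(Metric.sphere (0 : EuclideanSpace ℝ (Fin p)) 1) ×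
       ↥(Metric.sphere (0 : EuclideanSpace ℝ (Fin (q+1))) 1))) ∧
    IsPathConnected (Spq p q a ∩ {x | ∑ i : Fin (p+1), av i * x (idx1 p q i) = 0}) := by
  obtain ⟨h_homeo, h_path⟩ := stmt5_general p q a (ha.trans_le (le_abs_self a)) av hav
  exact ⟨h_homeo, h_path hp (one_le_two.trans hq)⟩
end

section
/- Let p, q ≥ 2 be integers, a > 1, let (b_{p+2},…,b_n) ∈ ℝ^q satisfy b_{p+2}² + ⋯ + b_n² = 1, and let c ∈ (0,1). Then the parallel S_{p,q} ∩ {x ∈ ℝⁿ : b_{p+2}x_{p+2} + ⋯ + b_nx_n = c} is nonempty and path connected. -/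
/-!
A parallel is a hypersurface of the same kind, one dimension lower. Writing the last `q`
coordinates as `c b + w` with `w ⟂ b`, it is given by `(‖u‖² - a²)² + ‖w‖² = r²`, where
`r² = 1 - c²`. Points of this hypersurface have the form `(√(a² + s) e, √(r² - s²) n)` with unit
vectors `e`, `n` and `max (-a²) (-r) ≤ s ≤ r`. For fixed `n` these form a path connected set, as
`e` runs over a sphere of positive dimension and `s` over an interval; all these sets share the
points with `s = r`, which do not depend on `n`, so their union is path connected even when the
sphere of `n` is not connected.
-/

section Biradial

open Metric Set

variable {E F : Type*} [NormedAddCommGroup E] [NormedSpace ℝ E]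
  [NormedAddCommGroup F] [NormedSpace ℝ F]

variable (E F) in
/-- The hypersurface `(‖u‖² - A)² + ‖w‖² = r²` in `E × F`, a coordinate-free version of `Spq p q a`
(the case `A = a²`, `r = 1`) that also covers its parallels. -/
def biradialSurface (A r : ℝ) : Set (E × F) :=
  {z | (‖z.1‖ ^ 2 - A) ^ 2 + ‖z.2‖ ^ 2 = r ^ 2}

/-- Parametrization of the part of `biradialSurface E F A r` lying over the ray spanned by `n` in
`F`: the pair `(s, e)` gives the point with `‖u‖² - A = s` and `u` in the direction `e`. -/
noncomputable def biradialParam (A r : ℝ) (n : F) (x : ℝ × E) : E × F :=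
  (√(A + x.1) • x.2, √(r ^ 2 - x.1 ^ 2) • n)

theorem continuous_biradialParam (A r : ℝ) (n : F) :
    Continuous (biradialParam A r n : ℝ × E → E × F) := by
  unfold biradialParam
  fun_prop

theorem biradialParam_radius (A r : ℝ) (n : F) (e : E) :
    biradialParam A r n (r, e) = (√(A + r) • e, 0) := by
  simp [biradialParam]

theorem biradialParam_mem_biradialSurface {A r : ℝ} {n : F} (hn : ‖n‖ = 1) {x : ℝ × E}
    (hx : x ∈ Icc (max (-A) (-r)) r ×ˢ sphere 0 1) :
    biradialParam A r n x ∈ biradialSurface E F A r := by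
  obtain ⟨⟨hs, hsr⟩, he⟩ := hx
  obtain ⟨hsA, hrs⟩ := max_le_iff.1 hs
  have hu : ‖√(A + x.1) • x.2‖ ^ 2 = A + x.1 := by
    rw [norm_smul, mem_sphere_zero_iff_norm.1 he, mul_one, Real.norm_eq_abs, sq_abs,
      Real.sq_sqrt (by linarith)]
  have hw : ‖√(r ^ 2 - x.1 ^ 2) • n‖ ^ 2 = r ^ 2 - x.1 ^ 2 := by
    rw [norm_smul, hn, mul_one, Real.norm_eq_abs, sq_abs,
      Real.sq_sqrt (sub_nonneg.2 (sq_le_sq' hrs hsr))]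
  change (‖√(A + x.1) • x.2‖ ^ 2 - A) ^ 2 + ‖√(r ^ 2 - x.1 ^ 2) • n‖ ^ 2 = r ^ 2
  rw [hu, hw]
  ring

theorem exists_norm_eq_one_and_norm_smul_eq [Nontrivial E] (u : E) :
    ∃ e : E, ‖e‖ = 1 ∧ ‖u‖ • e = u := by
  rcases eq_or_ne u 0 with rfl | hu
  · obtain ⟨e, he⟩ := exists_norm_eq E zero_le_one
    exact ⟨e, he, by simp⟩
  · exact ⟨NormedSpace.normalize u, NormedSpace.norm_normalize hu,
      NormedSpace.norm_smul_normalize u⟩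

theorem exists_biradialParam_eq [Nontrivial E] [Nontrivial F] {A r : ℝ} (hr : 0 ≤ r) {z : E × F}
    (hz : z ∈ biradialSurface E F A r) :
    ∃ n : F, ‖n‖ = 1 ∧
      ∃ x ∈ Icc (max (-A) (-r)) r ×ˢ sphere (0 : E) 1, biradialParam A r n x = z := by
  obtain ⟨u, w⟩ := z
  replace hz : (‖u‖ ^ 2 - A) ^ 2 + ‖w‖ ^ 2 = r ^ 2 := hz
  obtain ⟨e, he, hue⟩ := exists_norm_eq_one_and_norm_smul_eq u
  obtain ⟨n, hn, hwn⟩ := exists_norm_eq_one_and_norm_smul_eq w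
  obtain ⟨hrs, hsr⟩ : -r ≤ ‖u‖ ^ 2 - A ∧ ‖u‖ ^ 2 - A ≤ r :=
    abs_le.1 (abs_le_of_sq_le_sq (by linarith [sq_nonneg ‖w‖]) hr)
  have hsA : -A ≤ ‖u‖ ^ 2 - A := by linarith [sq_nonneg ‖u‖]
  refine ⟨n, hn, (‖u‖ ^ 2 - A, e), ⟨⟨max_le hsA hrs, hsr⟩, mem_sphere_zero_iff_norm.2 he⟩, ?_⟩
  have hnorm_u : √(A + (‖u‖ ^ 2 - A)) = ‖u‖ := by
    rw [add_sub_cancel, Real.sqrt_sq (norm_nonneg u)]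
  have hnorm_w : √(r ^ 2 - (‖u‖ ^ 2 - A) ^ 2) = ‖w‖ := by
    rw [← hz, add_sub_cancel_left, Real.sqrt_sq (norm_nonneg w)]
  simp only [biradialParam, hnorm_u, hnorm_w, hue, hwn]

theorem isPathConnected_biradialSurface (hE : 1 < Module.rank ℝ E) [Nontrivial F] {A r : ℝ}
    (hr : 0 ≤ r) (hA : -r ≤ A) : IsPathConnected (biradialSurface E F A r) := by
  have : Nontrivial E := rank_pos_iff_nontrivial.1 (zero_lt_one.trans hE)
  have hr_mem : r ∈ Icc (max (-A) (-r)) r := ⟨max_le (by linarith) (by linarith), le_rfl⟩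
  have hdomain : IsPathConnected (Icc (max (-A) (-r)) r ×ˢ sphere (0 : E) 1) :=
    ((convex_Icc _ _).isPathConnected ⟨r, hr_mem⟩).prod
      (isPathConnected_sphere hE 0 zero_le_one)
  obtain ⟨e₀, he₀⟩ := exists_norm_eq E zero_le_one
  obtain ⟨n₀, hn₀⟩ := exists_norm_eq F zero_le_one
  have hbase : (r, e₀) ∈ Icc (max (-A) (-r)) r ×ˢ sphere (0 : E) 1 :=
    ⟨hr_mem, mem_sphere_zero_iff_norm.2 he₀⟩
  refine ⟨(√(A + r) • e₀, 0), ?_, fun z hz ↦ ?_⟩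
  · rw [← biradialParam_radius A r n₀]
    exact biradialParam_mem_biradialSurface hn₀ hbase
  · obtain ⟨n, hn, x, hx, rfl⟩ := exists_biradialParam_eq hr hz
    have hjoined := (hdomain.image (continuous_biradialParam A r n)).joinedIn _
      (mem_image_of_mem _ hbase) _ (mem_image_of_mem _ hx)
    rw [biradialParam_radius] at hjoined
    exact hjoined.mono (image_subset_iff.2 fun _ ↦ biradialParam_mem_biradialSurface hn)

end Biradial

section Parallel

open Set

variable {E F : Type*} [NormedAddCommGroup E]
  [NormedAddCommGroup F] [InnerProductSpace ℝ F]

theorem nontrivial_orthogonal_span_singleton (hF : 1 < Module.rank ℝ F) (b : F) :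
    Nontrivial (ℝ ∙ b)ᗮ := by
  rw [Submodule.nontrivial_iff_ne_bot, Ne, Submodule.orthogonal_eq_bot_iff]
  intro htop
  have hrank : Module.rank ℝ F ≤ 1 := by
    rw [← rank_top, ← htop]
    simpa using rank_span_le (R := ℝ) {b}
  exact hF.not_ge hrank

theorem norm_smul_add_sq_of_mem_orthogonal {b w : F} (hb : ‖b‖ = 1) (hw : w ∈ (ℝ ∙ b)ᗮ) (c : ℝ) :
    ‖c • b + w‖ ^ 2 = c ^ 2 + ‖w‖ ^ 2 := by
  rw [norm_add_sq_real, real_inner_smul_left,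
    Submodule.mem_orthogonal_singleton_iff_inner_right.1 hw, norm_smul, hb, Real.norm_eq_abs,
    mul_one, sq_abs]
  ring

theorem smul_add_mem_biradialSurface_iff {A r c : ℝ} (hc : |c| ≤ r) {b : F} (hb : ‖b‖ = 1) {u : E}
    (w : (ℝ ∙ b)ᗮ) : (u, c • b + (w : F)) ∈ biradialSurface E F A r ↔
      (u, w) ∈ biradialSurface E (ℝ ∙ b)ᗮ A √(r ^ 2 - c ^ 2) := by
  have hcr : c ^ 2 ≤ r ^ 2 := sq_le_sq' (neg_le_of_abs_le hc) (le_of_abs_le hc)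
  change (‖u‖ ^ 2 - A) ^ 2 + ‖c • b + (w : F)‖ ^ 2 = r ^ 2 ↔
    (‖u‖ ^ 2 - A) ^ 2 + ‖(w : F)‖ ^ 2 = √(r ^ 2 - c ^ 2) ^ 2
  rw [norm_smul_add_sq_of_mem_orthogonal hb w.2, Real.sq_sqrt (sub_nonneg.2 hcr)]
  constructor <;> intro h <;> linarith

theorem image_biradialSurface_orthogonal {A r c : ℝ} (hc : |c| ≤ r) {b : F} (hb : ‖b‖ = 1) :
    (fun z : E × (ℝ ∙ b)ᗮ ↦ (z.1, c • b + (z.2 : F))) ''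
        biradialSurface E (ℝ ∙ b)ᗮ A √(r ^ 2 - c ^ 2) =
      biradialSurface E F A r ∩ {z | inner ℝ b z.2 = c} := by
  have hinner : inner ℝ b (c • b) = c := by
    rw [real_inner_smul_right, real_inner_self_eq_norm_sq, hb, one_pow, mul_one]
  apply Subset.antisymm
  · rintro _ ⟨⟨u, w⟩, hz, rfl⟩
    refine ⟨(smul_add_mem_biradialSurface_iff hc hb w).2 hz, ?_⟩
    change inner ℝ b (c • b + (w : F)) = c
    rw [inner_add_right, hinner, Submodule.mem_orthogonal_singleton_iff_inner_right.1 w.2, add_zero]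
  · rintro ⟨u, w⟩ ⟨hz, hw : inner ℝ b w = c⟩
    have hperp : w - c • b ∈ (ℝ ∙ b)ᗮ := by
      rw [Submodule.mem_orthogonal_singleton_iff_inner_right, inner_sub_right, hinner, hw, sub_self]
    have hdecomp : c • b + (w - c • b) = w := add_sub_cancel _ _
    refine ⟨(u, ⟨w - c • b, hperp⟩), (smul_add_mem_biradialSurface_iff hc hb _).1 ?_, ?_⟩
    · rwa [hdecomp]
    · simp only [hdecomp]

theorem isPathConnected_biradialSurface_inter_hyperplane [NormedSpace ℝ E]
    (hE : 1 < Module.rank ℝ E) (hF : 1 < Module.rank ℝ F) {A r c : ℝ}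
    (hA : -√(r ^ 2 - c ^ 2) ≤ A) (hc : |c| ≤ r) {b : F} (hb : ‖b‖ = 1) :
    IsPathConnected (biradialSurface E F A r ∩ {z | inner ℝ b z.2 = c}) := by
  have := nontrivial_orthogonal_span_singleton hF b
  rw [← image_biradialSurface_orthogonal hc hb]
  exact (isPathConnected_biradialSurface hE (Real.sqrt_nonneg _) hA).image (by fun_prop)

end Parallel

section Coordinates

open Set

/-- The splitting of `ℝ^{p+q+1}` into its first `p+1` and last `q` coordinates, with the Euclidean
norm on each factor. -/
noncomputable def splitCoords (p q : ℕ) :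
    (Fin (p + q + 1) → ℝ) ≃ₜ EuclideanSpace ℝ (Fin (p + 1)) × EuclideanSpace ℝ (Fin q) :=
  ((PiLp.homeomorph 2 fun _ ↦ ℝ).symm.trans
    (LinearIsometryEquiv.piLpCongrLeft 2 ℝ ℝ
      (finCongr (Nat.add_right_comm p q 1))).toHomeomorph).trans
    EuclideanSpace.finAddEquivProd.toHomeomorph

theorem splitCoords_fst_apply (p q : ℕ) (x : Fin (p + q + 1) → ℝ) (i : Fin (p + 1)) :
    (splitCoords p q x).1 i = x (idx1 p q i) :=
  rfl

theorem splitCoords_snd_apply (p q : ℕ) (x : Fin (p + q + 1) → ℝ) (j : Fin q) :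
    (splitCoords p q x).2 j = x (idx2 p q j) :=
  rfl

theorem splitCoords_preimage_biradialSurface (p q : ℕ) (a : ℝ) :
    splitCoords p q ⁻¹' biradialSurface _ _ (a ^ 2) 1 = Spq p q a := by
  ext x
  simp only [biradialSurface, Spq, mem_preimage, mem_ofPred_eq, EuclideanSpace.real_norm_sq_eq,
    splitCoords_fst_apply, splitCoords_snd_apply, one_pow]

theorem splitCoords_preimage_hyperplane (p q : ℕ) (b : Fin q → ℝ) (c : ℝ) :
    splitCoords p q ⁻¹' {z | inner ℝ (WithLp.toLp 2 b) z.2 = c} =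
      {x | ∑ j, b j * x (idx2 p q j) = c} := by
  ext x
  simp only [mem_preimage, mem_ofPred_eq, PiLp.inner_apply, splitCoords_snd_apply,
    RCLike.inner_apply', conj_trivial]

theorem one_lt_rank_euclideanSpace_fin {m : ℕ} (hm : 2 ≤ m) :
    1 < Module.rank ℝ (EuclideanSpace ℝ (Fin m)) := by
  rw [← Module.finrank_eq_rank, finrank_euclideanSpace_fin]
  exact_mod_cast hm

theorem stmt6_general (p q : ℕ) (hp : 1 ≤ p) (hq : 2 ≤ q) (a : ℝ)
    (b : Fin q → ℝ) (hb : ∑ j : Fin q, b j ^ 2 = 1) (c : ℝ) (hc : |c| ≤ 1) :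
    IsPathConnected (Spq p q a ∩ {x | ∑ j : Fin q, b j * x (idx2 p q j) = c}) := by
  have hb_norm : ‖WithLp.toLp 2 b‖ = 1 := by
    rw [EuclideanSpace.norm_eq]
    simp [hb]
  have hA : -√(1 ^ 2 - c ^ 2) ≤ a ^ 2 :=
    (neg_nonpos.2 (Real.sqrt_nonneg _)).trans (sq_nonneg a)
  rw [← splitCoords_preimage_biradialSurface, ← splitCoords_preimage_hyperplane,
    ← preimage_inter, Homeomorph.isPathConnected_preimage]
  exact isPathConnected_biradialSurface_inter_hyperplane
    (one_lt_rank_euclideanSpace_fin (Nat.succ_le_succ hp)) (one_lt_rank_euclideanSpace_fin hq)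
    hA hc hb_norm

end Coordinates

/-- For `p, q ≥ 2`, a unit vector `(b_{p+2},…,b_n) ∈ ℝ^q` and `c ∈ (0,1)`, the parallel
`S_{p,q} ∩ {b_{p+2}x_{p+2} + ⋯ + b_nx_n = c}` is nonempty and path connected. -/
theorem stmt6 (p q : ℕ) (hp : 2 ≤ p) (hq : 2 ≤ q) (a : ℝ) (ha : 1 < a)
    (b : Fin q → ℝ) (hb : ∑ j : Fin q, b j ^ 2 = 1) (c : ℝ) (hc : c ∈ Set.Ioo (0:ℝ) 1) :
    (Spq p q a ∩ {x | ∑ j : Fin q, b j * x (idx2 p q j) = c}).Nonempty ∧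
    IsPathConnected (Spq p q a ∩ {x | ∑ j : Fin q, b j * x (idx2 p q j) = c}) := by
  have h := stmt6_general p q (by omega) hq a b hb c (abs_le.2 ⟨by linarith [hc.1], hc.2.le⟩)
  exact ⟨h.nonempty, h⟩
end

section
/- Let X = Σ_{i=1}^n Rᵢ ∂/∂xᵢ be a polynomial vector field of degree at most one defined on S_{p,q}, with Rᵢ = Σ_{j=1}^n c_{ij} xⱼ + c_{i0}. Suppose the meridian {a₁x₁ + ⋯ + a_{p+1}x_{p+1} = 0}, with (a₁,…,a_{p+1}) ≠ 0, is invariant for X, i.e. Σ_{i=1}^{p+1} aᵢRᵢ = K'·(Σ_{i=1}^{p+1} aᵢxᵢ) for some polynomial K'. Then Σ_{i=1}^{p+1} aᵢ c_{ij} = 0 for every j ∈ {1,…,p+1}; that is, (a₁,…,a_{p+1}) is an eigenvector of the transpose of A = (c_{ij})_{1≤i,j≤p+1} with eigenvalue 0 (A being skew-symmetric, 0 is its only possible real eigenvalue). -/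
open MvPolynomial

/-!
If the hyperplane `v ⬝ᵥ x = 0` is invariant for an affine field `X`, the affine function `v ⬝ᵥ X`
vanishes on it. For the meridian, `v` has a positive multiple `x` with `x ⬝ᵥ x = a² + 1`; it is a
zero of `h` at which the gradient of `h` equals `4x`, hence is parallel to `v`. Since `X` is tangent
to `h = 0`, the function `v ⬝ᵥ X` vanishes at `x` as well, and as `x` lies off the hyperplane,
`v ⬝ᵥ X` is identically zero.
-/

section InvariantHypersurface

open Matrix

variable {σ k : Type*} [Fintype σ]

/-- The polynomial vector field with components `∑ j, A i j * X j + b i`. -/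
noncomputable def affineField [CommSemiring k] (A : Matrix σ σ k) (b : σ → k) :
    σ → MvPolynomial σ k :=
  fun i => ∑ j, C (A i j) * X j + C (b i)

/-- The hypersurface `f = 0` is invariant for the polynomial vector field `R = ∑ i, R i ∂/∂xᵢ`:
the field maps `f` to a multiple `K * f`, the cofactor `K` being left implicit. -/
def IsInvariantHypersurface [CommSemiring k] (R : σ → MvPolynomial σ k) (f : MvPolynomial σ k) :
    Prop :=
  f ∣ ∑ i, R i * pderiv i f

/-- The homogeneous linear polynomial with coefficient vector `v`, whose zero set is the linear
hyperplane with normal `v`. -/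
noncomputable def linearForm [CommSemiring k] (v : σ → k) : MvPolynomial σ k :=
  ∑ i, C (v i) * X i

section CommSemiring

variable [CommSemiring k]

theorem eval_affineField (A : Matrix σ σ k) (b x : σ → k) (i : σ) :
    eval x (affineField A b i) = (A *ᵥ x + b) i := by
  simp [affineField, mulVec, dotProduct]

theorem eval_linearForm (v x : σ → k) : eval x (linearForm v) = v ⬝ᵥ x := by
  simp [linearForm, dotProduct]

theorem pderiv_linearForm (v : σ → k) (i : σ) : pderiv i (linearForm v) = C (v i) := by
  classical
  simp [linearForm, Pi.single_apply]

theorem IsInvariantHypersurface.dotProduct_eval_pderiv_eq_zero {R : σ → MvPolynomial σ k}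
    {f : MvPolynomial σ k} (hf : IsInvariantHypersurface R f) {x : σ → k} (hx : eval x f = 0) :
    (fun i => eval x (R i)) ⬝ᵥ (fun i => eval x (pderiv i f)) = 0 := by
  have h := map_dvd (eval x) hf
  rw [hx, zero_dvd_iff] at h
  simpa [dotProduct] using h

end CommSemiring

variable [Field k]

theorem eq_zero_of_dotProduct_eq_zero_on_hyperplane {v w p : σ → k} (hp : v ⬝ᵥ p ≠ 0)
    (hwp : w ⬝ᵥ p = 0) (hw : ∀ x, v ⬝ᵥ x = 0 → w ⬝ᵥ x = 0) : w = 0 := by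
  refine dotProduct_eq_zero w fun y => ?_
  have hproj : v ⬝ᵥ (y - (v ⬝ᵥ y / v ⬝ᵥ p) • p) = 0 := by
    simp [dotProduct_sub, hp]
  simpa [dotProduct_sub, hwp] using hw _ hproj

theorem vecMul_eq_zero_and_dotProduct_eq_zero_of_isInvariantHypersurface {A : Matrix σ σ k}
    {b v x : σ → k} {f : MvPolynomial σ k} {μ : k}
    (hv : IsInvariantHypersurface (affineField A b) (linearForm v))
    (hf : IsInvariantHypersurface (affineField A b) f)
    (hfx : eval x f = 0) (hgrad : (fun i => eval x (pderiv i f)) = μ • v) (hμ : μ ≠ 0)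
    (hvx : v ⬝ᵥ x ≠ 0) : v ᵥ* A = 0 ∧ v ⬝ᵥ b = 0 := by
  have hhyper (y : σ → k) (hy : v ⬝ᵥ y = 0) : (v ᵥ* A) ⬝ᵥ y + v ⬝ᵥ b = 0 := by
    have h := hv.dotProduct_eval_pderiv_eq_zero ((eval_linearForm v y).trans hy)
    simp only [eval_affineField, pderiv_linearForm, eval_C] at h
    rwa [dotProduct_comm, dotProduct_add, dotProduct_mulVec] at h
  have hb : v ⬝ᵥ b = 0 := by simpa using hhyper 0 (dotProduct_zero v)
  have htangent : (v ᵥ* A) ⬝ᵥ x = 0 := by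
    have h := hf.dotProduct_eval_pderiv_eq_zero hfx
    simp only [eval_affineField] at h
    rw [hgrad, dotProduct_smul, dotProduct_comm, dotProduct_add, dotProduct_mulVec, hb,
      add_zero] at h
    exact (smul_eq_zero.mp h).resolve_left hμ
  exact ⟨eq_zero_of_dotProduct_eq_zero_on_hyperplane hvx htangent
    fun y hy => by simpa [hb] using hhyper y hy, hb⟩

end InvariantHypersurface

section ExtensionByZero

variable {ι σ k S : Type*} [Fintype ι] {e : ι → σ}

theorem sum_map_extend_zero_mul [Fintype σ] [NonAssocSemiring k]
    [NonAssocSemiring S] (he : e.Injective) (φ : k →+* S) (u : ι → k) (g : σ → S) :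
    ∑ s, φ (Function.extend e u 0 s) * g s = ∑ i, φ (u i) * g (e i) := by
  refine (Fintype.sum_of_injective e he _ _ (fun s hs => ?_) fun i => ?_).symm
  · rw [Function.extend_apply' _ _ _ hs, Pi.zero_apply, map_zero, zero_mul]
  · rw [he.extend_apply]

theorem isInvariantHypersurface_linearForm_extend_iff [Fintype σ] [CommSemiring k]
    (he : e.Injective) {R : σ → MvPolynomial σ k} {u : ι → k} :
    IsInvariantHypersurface R (linearForm (Function.extend e u 0)) ↔
      (∑ i, C (u i) * X (e i)) ∣ ∑ i, C (u i) * R (e i) := by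
  simp only [IsInvariantHypersurface, pderiv_linearForm, mul_comm (R _)]
  simp only [linearForm, sum_map_extend_zero_mul he C]

theorem eval_pderiv_sum_X_sq [CommSemiring k] (he : e.Injective) (x : σ → k) (s : σ) :
    eval x (pderiv s (∑ i, X (e i) ^ 2)) = 2 * Function.extend e (x ∘ e) 0 s := by
  classical
  simp only [map_sum, pderiv_pow, pderiv_X, map_mul, Nat.cast_ofNat, map_ofNat, eval_X,
    Nat.add_one_sub_one, pow_one]
  by_cases hs : s ∈ Set.range e
  · obtain ⟨i, rfl⟩ := hs
    simp [he.extend_apply, Pi.single_apply, he.eq_iff, apply_ite]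
  · have hne (i : ι) : e i ≠ s := fun h => hs ⟨i, h⟩
    simp [hne]

end ExtensionByZero

open Matrix in
theorem exists_pos_smul_dotProduct_self_eq {ι : Type*} [Fintype ι] {v : ι → ℝ} (hv : v ≠ 0)
    {r : ℝ} (hr : 0 < r) : ∃ t : ℝ, 0 < t ∧ (t • v) ⬝ᵥ (t • v) = r := by
  have hN : 0 < v ⬝ᵥ v := by simpa using dotProduct_star_self_pos_iff.mpr hv
  refine ⟨√(r / v ⬝ᵥ v), Real.sqrt_pos.mpr (by positivity), ?_⟩
  rw [smul_dotProduct, dotProduct_smul, smul_smul, Real.mul_self_sqrt (by positivity), smul_eq_mul,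
    div_mul_cancel₀ _ hN.ne']

section Hypersurface

open Matrix

variable {p q : ℕ}

theorem idx1_injective : (idx1 p q).Injective :=
  Fin.castLE_injective (by omega)

theorem idx2_injective : (idx2 p q).Injective := fun i j h => by
  simpa [idx2, Fin.ext_iff] using h

theorem idx2_notMem_range_idx1 (j : Fin q) : idx2 p q j ∉ Set.range (idx1 p q) := by
  rintro ⟨i, hi⟩
  simp only [idx1, idx2, Fin.ext_iff, Fin.val_castLE] at hi
  omega

theorem extend_idx1_zero_comp_idx2 (u : Fin (p + 1) → ℝ) :
    Function.extend (idx1 p q) u 0 ∘ idx2 p q = 0 :=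
  funext fun j => Function.extend_apply' _ _ _ (idx2_notMem_range_idx1 j)

variable {a : ℝ} {u : Fin (p + 1) → ℝ}

theorem eval_hpq_extend_idx1 (hu : u ⬝ᵥ u = a ^ 2 + 1) :
    eval (Function.extend (idx1 p q) u 0) (hpq p q a) = 0 := by
  have hidx2 (j : Fin q) := congrFun (extend_idx1_zero_comp_idx2 u) j
  have hsq : ∑ i, u i ^ 2 = a ^ 2 + 1 := by simpa [dotProduct, sq] using hu
  simp only [Function.comp_apply, Pi.zero_apply] at hidx2
  simp [hpq, idx1_injective.extend_apply, hidx2, hsq]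

theorem eval_pderiv_hpq_extend_idx1 (hu : u ⬝ᵥ u = a ^ 2 + 1) :
    (fun s => eval (Function.extend (idx1 p q) u 0) (pderiv s (hpq p q a))) =
      (4 : ℝ) • Function.extend (idx1 p q) u 0 := by
  ext s
  have hsq : ∑ i, u i ^ 2 = a ^ 2 + 1 := by simpa [dotProduct, sq] using hu
  have hfirst := eval_pderiv_sum_X_sq idx1_injective (Function.extend (idx1 p q) u 0) s
  have hlast := eval_pderiv_sum_X_sq idx2_injective (Function.extend (idx1 p q) u 0) s
  rw [Function.extend_comp idx1_injective] at hfirst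
  rw [extend_idx1_zero_comp_idx2, Function.extend_zero] at hlast
  simp only [hpq, map_sub, map_add, pderiv_pow, pderiv_C, pderiv_one, map_mul, hfirst,
    hlast]
  simp only [Nat.cast_ofNat, eval_ofNat, Nat.add_one_sub_one, pow_one, map_sub, map_sum,
    map_pow, eval_X, idx1_injective.extend_apply, hsq, eval_C, add_sub_cancel_left, mul_one,
    map_zero, sub_zero, Pi.zero_apply, mul_zero, add_zero, Pi.smul_apply, smul_eq_mul]
  ring

theorem exists_pos_eval_hpq_smul_eq_zero_and_gradient_eq_smul (a : ℝ) {v : Fin (p + 1) → ℝ}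
    (hv : v ≠ 0) : ∃ t : ℝ, 0 < t ∧
      eval (t • Function.extend (idx1 p q) v 0) (hpq p q a) = 0 ∧
      (fun s => eval (t • Function.extend (idx1 p q) v 0) (pderiv s (hpq p q a))) =
        (4 * t) • Function.extend (idx1 p q) v 0 := by
  obtain ⟨t, ht, htv⟩ := exists_pos_smul_dotProduct_self_eq hv (show 0 < a ^ 2 + 1 by positivity)
  have hx : Function.extend (idx1 p q) (t • v) 0 = t • Function.extend (idx1 p q) v 0 := by
    simpa only [smul_zero] using Function.extend_smul t (idx1 p q) v 0
  refine ⟨t, ht, ?_⟩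
  rw [mul_smul, ← hx]
  exact ⟨eval_hpq_extend_idx1 htv, eval_pderiv_hpq_extend_idx1 htv⟩

end Hypersurface

open Matrix in
theorem stmt9_general (p q : ℕ) (a : ℝ)
    (R : Fin (p + q + 1) → MvPolynomial (Fin (p + q + 1)) ℝ)
    (c : Fin (p + q + 1) → Fin (p + q + 1) → ℝ) (c0 : Fin (p + q + 1) → ℝ)
    (hR : ∀ i, R i = (∑ j, C (c i j) * X j) + C (c0 i))
    (K : MvPolynomial (Fin (p + q + 1)) ℝ)
    (hinv : (∑ i, R i * pderiv i (hpq p q a)) = K * hpq p q a)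
    (av : Fin (p + 1) → ℝ)
    (K' : MvPolynomial (Fin (p + q + 1)) ℝ)
    (hmer : (∑ i : Fin (p + 1), C (av i) * R (idx1 p q i))
      = K' * (∑ i : Fin (p + 1), C (av i) * X (idx1 p q i))) :
    (∀ j, ∑ i : Fin (p + 1), av i * c (idx1 p q i) j = 0) ∧
      ∑ i : Fin (p + 1), av i * c0 (idx1 p q i) = 0 := by
  obtain rfl | hav := eq_or_ne av 0
  · simp
  obtain rfl : R = affineField c c0 := funext hR
  set v := Function.extend (idx1 p q) av 0 with hv
  have hv0 : v ≠ 0 := fun h => hav (by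
    rw [← Function.extend_comp idx1_injective av 0, ← hv, h, Pi.zero_comp])
  have hmeridian : IsInvariantHypersurface (affineField c c0) (linearForm v) :=
    (isInvariantHypersurface_linearForm_extend_iff idx1_injective).mpr
      (Dvd.intro_left K' hmer.symm)
  obtain ⟨t, ht, hzero, hgrad⟩ := exists_pos_eval_hpq_smul_eq_zero_and_gradient_eq_smul a hav
  have htransversal : v ⬝ᵥ (t • v) ≠ 0 := by simp [ht.ne', hv0]
  obtain ⟨hA, hb⟩ := vecMul_eq_zero_and_dotProduct_eq_zero_of_isInvariantHypersurface hmeridian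
    (Dvd.intro_left K hinv.symm) hzero hgrad (by positivity) htransversal
  have hsum (g : Fin (p + q + 1) → ℝ) : v ⬝ᵥ g = ∑ i, av i * g (idx1 p q i) :=
    sum_map_extend_zero_mul idx1_injective (RingHom.id ℝ) av g
  exact ⟨fun j => (hsum _).symm.trans (congrFun hA j), (hsum c0).symm.trans hb⟩

/-- If the meridian `{a₁x₁ + ⋯ + a_{p+1}x_{p+1} = 0}` is invariant for a degree-one
vector field `X = Σ Rᵢ ∂/∂xᵢ` defined on `S_{p,q}`, with `Rᵢ = Σⱼ c_{ij}xⱼ + c_{i0}`,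
then `Σ_{i=1}^{p+1} aᵢ c_{ij} = 0` for every `j ∈ {1,…,p+1}`: the vector
`(a₁,…,a_{p+1})` is an eigenvector of the transpose of `A = (c_{ij})_{1≤i,j≤p+1}`
with eigenvalue `0`. -/
theorem stmt9 (p q : ℕ) (hp : 1 ≤ p) (hq : 1 ≤ q) (a : ℝ) (ha : 1 < a)
    (R : Fin (p+q+1) → MvPolynomial (Fin (p+q+1)) ℝ)
    (c : Fin (p+q+1) → Fin (p+q+1) → ℝ) (c0 : Fin (p+q+1) → ℝ)
    (hR : ∀ i, R i = (∑ j, C (c i j) * X j) + C (c0 i))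
    (K : MvPolynomial (Fin (p+q+1)) ℝ)
    (hinv : (∑ i, R i * pderiv i (hpq p q a)) = K * hpq p q a)
    (av : Fin (p+1) → ℝ) (hav : av ≠ 0)
    (K' : MvPolynomial (Fin (p+q+1)) ℝ)
    (hmer : (∑ i : Fin (p+1), C (av i) * R (idx1 p q i))
      = K' * (∑ i : Fin (p+1), C (av i) * X (idx1 p q i))) :
    ∀ j : Fin (p+1), ∑ i : Fin (p+1), av i * c (idx1 p q i) (idx1 p q j) = 0 := by
  intro j
  exact (stmt9_general p q a R c c0 hR K hinv av K' hmer).1 (idx1 p q j)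
end

section
/- Let q ≥ 1 and m be integers with m − 1 ≥ q, set n = q + 2, and fix a > 1. Then there exists a polynomial vector field X = Σ_{i=1}^n Rᵢ ∂/∂xᵢ of degree m defined on S_{1,q} together with m − 1 pairwise non-proportional nonzero pairs (a_k, b_k) ∈ ℝ², k = 1,…,m−1, such that each hyperplane {a_kx₁ + b_kx₂ = 0} is invariant for X; counting the two connected components of each such intersection with S_{1,q}, X has 2(m − 1) invariant meridians. -/
open MvPolynomial

/-- The polynomial `h = (x₁² + x₂² − a²)² + x₃² + ⋯ + x_n² − 1`
whose zero set is `S_{1,q} ⊂ ℝ^{q+2}`. -/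
noncomputable def h1q (q : ℕ) (a : ℝ) : MvPolynomial (Fin (q+2)) ℝ :=
  (X 0 ^ 2 + X 1 ^ 2 - C (a^2))^2
    + (∑ j : Fin q, X (⟨2+(j:ℕ), by omega⟩ : Fin (q+2)) ^ 2) - 1

/-!
The infinitesimal rotation `x₂ ∂/∂x₁ - x₁ ∂/∂x₂` annihilates every polynomial in `x₁² + x₂²` and
the remaining variables, in particular `h`. This survives multiplication by any polynomial `f`, and
the product field leaves every factor of `f` invariant. Taking for `f` a product of `m - 1` linear
forms in `x₁, x₂` gives a field of degree `m` for which all these forms are invariant.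
-/

theorem derivation_sum_apply {ι A B M : Type*} [CommSemiring A] [CommSemiring B] [Algebra A B]
    [AddCommMonoid M] [Module A M] [Module B M] (s : Finset ι) (D : ι → Derivation A B M) (x : B) :
    (∑ i ∈ s, D i) x = ∑ i ∈ s, D i x := by
  rw [← Derivation.coeFnAddMonoidHom_apply, map_sum, Finset.sum_apply]
  rfl

theorem derivation_eq_sum_mul_pderiv {σ A : Type*} [Fintype σ] [CommSemiring A]
    (D : Derivation A (MvPolynomial σ A) (MvPolynomial σ A)) (p : MvPolynomial σ A) :
    D p = ∑ l, D (X l) * pderiv l p := by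
  classical
  have hD : D = ∑ l, D (X l) • pderiv l :=
    derivation_ext fun i => by simp [derivation_sum_apply, pderiv_X, Pi.single_apply]
  simpa only [derivation_sum_apply, Derivation.smul_apply, smul_eq_mul] using congr($hD p)

section LineForm

variable {σ A : Type*} [CommSemiring A]

/-- The linear form `v₁ xᵢ + v₂ xⱼ`. For `v ≠ 0` it cuts out a hyperplane containing the subspace
`xᵢ = xⱼ = 0`; the hyperplanes carrying the meridians of `S_{1,q}` are of this kind. -/
noncomputable def lineForm (i j : σ) (v : A × A) : MvPolynomial σ A :=
  C v.1 * X i + C v.2 * X j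

theorem isHomogeneous_lineForm (i j : σ) (v : A × A) : (lineForm i j v).IsHomogeneous 1 :=
  (isHomogeneous_C_mul_X v.1 i).add (isHomogeneous_C_mul_X v.2 j)

theorem lineForm_ne_zero {i j : σ} (hij : i ≠ j) {v : A × A} (hv : v ≠ 0) :
    lineForm i j v ≠ 0 := by
  classical
  intro h
  have h₁ : v.1 = 0 := by
    simpa [lineForm, Pi.single_apply, hij.symm] using congr(eval (Pi.single i 1) $h)
  have h₂ : v.2 = 0 := by
    simpa [lineForm, Pi.single_apply, hij] using congr(eval (Pi.single j 1) $h)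
  exact hv (Prod.ext h₁ h₂)

theorem isHomogeneous_prod_lineForm {ι : Type*} [Fintype ι] (i j : σ) (v : ι → A × A) :
    (∏ k, lineForm i j (v k)).IsHomogeneous (Fintype.card ι) := by
  simpa using IsHomogeneous.prod Finset.univ _ _ fun k _ => isHomogeneous_lineForm i j (v k)

end LineForm

section Rotation

variable {σ A : Type*} [CommRing A]

/-- The infinitesimal rotation `xⱼ ∂/∂xᵢ - xᵢ ∂/∂xⱼ` in the plane of the coordinates `xᵢ, xⱼ`. The
vector field is encoded as a derivation, whose value on `xₗ` is its `l`-th component. -/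
noncomputable def planeRotation (i j : σ) :
    Derivation A (MvPolynomial σ A) (MvPolynomial σ A) :=
  (X j : MvPolynomial σ A) • pderiv i - (X i : MvPolynomial σ A) • pderiv j

theorem planeRotation_X_left {i j : σ} (hij : i ≠ j) :
    planeRotation i j (X i : MvPolynomial σ A) = X j := by
  simp [planeRotation, pderiv_X_of_ne hij]

theorem planeRotation_X_right {i j : σ} (hij : i ≠ j) :
    planeRotation i j (X j : MvPolynomial σ A) = -X i := by
  simp [planeRotation, pderiv_X_of_ne hij.symm]

theorem planeRotation_X_of_ne {i j l : σ} (hi : l ≠ i) (hj : l ≠ j) :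
    planeRotation i j (X l : MvPolynomial σ A) = 0 := by
  simp [planeRotation, pderiv_X_of_ne hi, pderiv_X_of_ne hj]

theorem isHomogeneous_planeRotation_X {i j : σ} (hij : i ≠ j) (l : σ) :
    (planeRotation i j (X l : MvPolynomial σ A)).IsHomogeneous 1 := by
  by_cases hi : l = i
  · simpa only [hi, planeRotation_X_left hij] using isHomogeneous_X A j
  by_cases hj : l = j
  · simpa only [hj, planeRotation_X_right hij] using (isHomogeneous_X A i).neg
  simpa only [planeRotation_X_of_ne hi hj] using isHomogeneous_zero σ A 1

theorem planeRotation_X_sq_add_X_sq {i j : σ} (hij : i ≠ j) :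
    planeRotation i j (X i ^ 2 + X j ^ 2 : MvPolynomial σ A) = 0 := by
  simp only [map_add, Derivation.leibniz_pow, planeRotation_X_left hij, planeRotation_X_right hij,
    smul_eq_mul, nsmul_eq_mul]
  ring

end Rotation

theorem planeRotation_h1q (q : ℕ) (a : ℝ) : planeRotation 0 1 (h1q q a) = 0 := by
  have hrest (j : Fin q) :
      planeRotation 0 1 (X ⟨2 + j, by omega⟩ : MvPolynomial (Fin (q + 2)) ℝ) = 0 :=
    planeRotation_X_of_ne (Fin.ne_of_val_ne (by simp)) (Fin.ne_of_val_ne (by grind [Fin.val_one]))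
  have hplane : planeRotation 0 1 (X 0 ^ 2 + X 1 ^ 2 - C (a ^ 2) : MvPolynomial (Fin (q + 2)) ℝ)
      = 0 := by
    rw [map_sub, planeRotation_X_sq_add_X_sq zero_ne_one, derivation_C, sub_zero]
  simp only [h1q, map_sub, map_add, map_sum, Derivation.leibniz_pow, hplane, hrest, smul_zero,
    Finset.sum_const_zero, Derivation.map_one_eq_zero, add_zero, sub_zero]

theorem stmt16_general {σ A : Type*} [Fintype σ] [CommRing A] [IsDomain A]
    {i j : σ} (hij : i ≠ j) {h : MvPolynomial σ A} (hh : planeRotation i j h = 0)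
    {d : ℕ} {v : Fin d → A × A} (hv : ∀ k, v k ≠ 0) :
    ∃ R : σ → MvPolynomial σ A,
      (∀ l, (R l).totalDegree ≤ d + 1) ∧
      (∃ l, (R l).totalDegree = d + 1) ∧
      ∑ l, R l * pderiv l h = 0 ∧
      ∀ k, ∃ K, ∑ l, R l * pderiv l (lineForm i j (v k)) = K * lineForm i j (v k) := by
  let f : MvPolynomial σ A := ∏ k, lineForm i j (v k)
  let D : Derivation A (MvPolynomial σ A) (MvPolynomial σ A) := f • planeRotation i j
  have hf : f ≠ 0 := Finset.prod_ne_zero_iff.2 fun k _ => lineForm_ne_zero hij (hv k)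
  have hfhom : f.IsHomogeneous d := by simpa using isHomogeneous_prod_lineForm i j v
  have hhom (l : σ) : (D (X l)).IsHomogeneous (d + 1) :=
    hfhom.mul (isHomogeneous_planeRotation_X hij l)
  have hne : D (X i) ≠ 0 := by
    simpa [D, planeRotation_X_left hij] using hf
  refine ⟨fun l => D (X l), fun l => (hhom l).totalDegree_le, ⟨i, (hhom i).totalDegree hne⟩, ?_,
    fun k => ?_⟩
  · rw [← derivation_eq_sum_mul_pderiv, Derivation.smul_apply, hh, smul_zero]
  · have hdvd : lineForm i j (v k) ∣ D (lineForm i j (v k)) :=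
      (Finset.dvd_prod_of_mem _ (Finset.mem_univ k)).mul_right _
    rw [← derivation_eq_sum_mul_pderiv]
    exact exists_eq_mul_left_of_dvd hdvd

section NatSlope

variable {A : Type*} [Semiring A] {n : ℕ}

/-- The vectors `(1, 0), (1, 1), …, (1, n - 1)`: the coefficient pairs of `n` lines
`x₁ + k x₂ = 0` through the origin, distinct in characteristic zero. -/
def natSlope (k : Fin n) : A × A := (1, (k : ℕ))

theorem natSlope_ne_zero [Nontrivial A] (k : Fin n) : (natSlope k : A × A) ≠ 0 :=
  fun h => one_ne_zero congr(($h).1)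

theorem natSlope_ne_smul [CharZero A] {k l : Fin n} (hkl : k ≠ l) (t : A) :
    natSlope k ≠ t • (natSlope l : A × A) := by
  intro h
  have ht : t = 1 := by simpa [natSlope] using congr(($h).1).symm
  have hslope : ((k : ℕ) : A) = (l : ℕ) := by simpa [natSlope, ht] using congr(($h).2)
  exact hkl (Fin.ext (Nat.cast_injective hslope))

end NatSlope

/-- For `m − 1 ≥ q` there exists a polynomial vector field `X` of degree `m` defined on
`S_{1,q}`, together with `m − 1` pairwise non-proportional nonzero pairs
`(a_k, b_k) ∈ ℝ²`, such that each hyperplane `{a_kx₁ + b_kx₂ = 0}` is invariant for `X`;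
counting the two connected components of each intersection with `S_{1,q}`, `X` has
`2(m − 1)` invariant meridians. -/
theorem stmt16 (q m : ℕ) (hq : 1 ≤ q) (hm : q + 1 ≤ m) (a : ℝ) (ha : 1 < a) :
    ∃ (R : Fin (q+2) → MvPolynomial (Fin (q+2)) ℝ)
      (K : MvPolynomial (Fin (q+2)) ℝ) (v : Fin (m-1) → ℝ × ℝ),
      (∀ i, (R i).totalDegree ≤ m) ∧ (∃ i, (R i).totalDegree = m) ∧
      (∑ i, R i * pderiv i (h1q q a)) = K * h1q q a ∧
      (∀ k, v k ≠ 0) ∧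
      (∀ k l, k ≠ l → ∀ t : ℝ, v k ≠ (t * (v l).1, t * (v l).2)) ∧
      (∀ k, ∃ K' : MvPolynomial (Fin (q+2)) ℝ,
        (∑ i, R i * pderiv i (C (v k).1 * X 0 + C (v k).2 * X 1))
          = K' * (C (v k).1 * X 0 + C (v k).2 * X 1)) := by
  obtain ⟨d, rfl⟩ := Nat.exists_eq_add_of_le' (le_of_add_le_right hm)
  obtain ⟨R, hle, hdeg, hh, hinv⟩ := stmt16_general zero_ne_one (planeRotation_h1q q a)
    (natSlope_ne_zero (n := d))
  exact ⟨R, 0, natSlope, hle, hdeg, by rw [hh, zero_mul], natSlope_ne_zero,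
    fun _ _ => natSlope_ne_smul, hinv⟩
end
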